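/- Let Ω ⊂ X be an open set, and suppose that u_i → u in L^1_loc(Ω) and ‖Du_i‖(Ω) → ‖Du‖(Ω), with ‖Du‖(Ω) < ∞ and ‖Du_i‖(Ω) < ∞ for all i ∈ ℕ. Then for every ε > 0 there exists δ > 0 such that if A ⊂ Ω with capa_1(A) < δ, then ‖Du_i‖(A) < ε for all i ∈ ℕ. (In other words, the variation measures ‖Du_i‖ are uniformly absolutely continuous with respect to the 1-capacity.) -/

import Mathlib

open MeasureTheory Filter Metric Set
open scoped Topology ENNReal NNReal symmDiff

noncomputable section

namespace PaperBV

/-- A rectifiable curve parametrized by arc-length: a `1`-Lipschitz map on `[0, len]`. -/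
structure Curve (X : Type*) [MetricSpace X] where
  len : ℝ
  len_nonneg : 0 ≤ len
  toFun : ℝ → X
  lip : LipschitzOnWith 1 toFun (Set.Icc 0 len)

variable {X : Type*} [MetricSpace X] [MeasurableSpace X] [BorelSpace X]

/-- The curve lies in the set `A`. -/
def Curve.In (γ : Curve X) (A : Set X) : Prop :=
  ∀ t ∈ Set.Icc (0 : ℝ) γ.len, γ.toFun t ∈ A

/-- The curve integral `∫_γ g ds` of a nonnegative function, for an
arc-length parametrized curve. -/
def Curve.integral (γ : Curve X) (g : X → ℝ≥0∞) : ℝ≥0∞ :=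
  ∫⁻ t in Set.Icc (0 : ℝ) γ.len, g (γ.toFun t)

/-- The upper gradient inequality `|u(x) - u(y)| ≤ ∫_γ g ds` along the curve `γ`,
where `x, y` are the endpoints of `γ`. -/
def UGIneq (u : X → ℝ) (g : X → ℝ≥0∞) (γ : Curve X) : Prop :=
  ENNReal.ofReal |u (γ.toFun 0) - u (γ.toFun γ.len)| ≤ γ.integral g

/-- `g` is an upper gradient of `u` on `X`: `g` is nonnegative (automatic in `ℝ≥0∞`),
Borel, and the upper gradient inequality holds along every curve. -/
def IsUpperGradient (u : X → ℝ) (g : X → ℝ≥0∞) : Prop :=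
  Measurable g ∧ ∀ γ : Curve X, UGIneq u g γ

/-- A family of curves has zero `1`-modulus: there is a nonnegative Borel function
`ρ ∈ L¹(X)` whose curve integral is infinite along every curve of the family. -/
def ZeroMod (μ : Measure X) (Γ : Set (Curve X)) : Prop :=
  ∃ ρ : X → ℝ≥0∞, Measurable ρ ∧ (∫⁻ x, ρ x ∂μ) < ∞ ∧ ∀ γ ∈ Γ, γ.integral ρ = ∞

/-- `g` is a `1`-weak upper gradient of `u` in `A`: `g` is nonnegative, `μ`-measurable,
and the upper gradient inequality holds along `1`-a.e. curve in `A`. -/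
def IsWeakUpperGradientOn (μ : Measure X) (u : X → ℝ) (g : X → ℝ≥0∞) (A : Set X) : Prop :=
  AEMeasurable g μ ∧ ZeroMod μ {γ : Curve X | γ.In A ∧ ¬ UGIneq u g γ}

/-- A nonnegative function `g` belongs to `L¹_loc(A)`. -/
def LIntegrableLocOn (μ : Measure X) (g : X → ℝ≥0∞) (A : Set X) : Prop :=
  ∀ x ∈ A, ∃ r > (0 : ℝ), (∫⁻ y in A ∩ Metric.ball x r, g y ∂μ) < ∞

/-- `g` is the minimal `1`-weak upper gradient of `u` in `A`: a `1`-weak upper gradient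
satisfying `g ≤ g'` `μ`-a.e. in `A` for every `1`-weak upper gradient `g' ∈ L¹_loc(A)`. -/
def IsMinimalWUG (μ : Measure X) (u : X → ℝ) (g : X → ℝ≥0∞) (A : Set X) : Prop :=
  IsWeakUpperGradientOn μ u g A ∧
    ∀ g' : X → ℝ≥0∞, IsWeakUpperGradientOn μ u g' A → LIntegrableLocOn μ g' A →
      ∀ᵐ x ∂(μ.restrict A), g x ≤ g' x

/-- The Newtonian norm `‖u‖_{N^{1,1}(A)}` (valued in `ℝ≥0∞`). -/
def NNorm (μ : Measure X) (A : Set X) (u : X → ℝ) : ℝ≥0∞ :=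
  (∫⁻ x in A, ENNReal.ofReal |u x| ∂μ) +
    ⨅ (g : X → ℝ≥0∞) (_ : IsWeakUpperGradientOn μ u g A), ∫⁻ x in A, g x ∂μ

/-- `u ∈ N^{1,1}(A)`. -/
def MemN11 (μ : Measure X) (A : Set X) (u : X → ℝ) : Prop :=
  NNorm μ A u < ∞

/-- `u ∈ N^{1,1}_loc(A)`: every point of `A` has a ball `B` with `u ∈ N^{1,1}(A ∩ B)`. -/
def MemN11Loc (μ : Measure X) (A : Set X) (u : X → ℝ) : Prop :=
  ∀ x ∈ A, ∃ r > (0 : ℝ), NNorm μ (A ∩ Metric.ball x r) u < ∞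

/-- `u ∈ N^{1,1}(Ω')` for every bounded open `Ω' ⊆ X`. -/
def MemN11LocBounded (μ : Measure X) (u : X → ℝ) : Prop :=
  ∀ Ω' : Set X, IsOpen Ω' → Bornology.IsBounded Ω' → NNorm μ Ω' u < ∞

/-- `u ∈ N^{1,1}_0(Ω)`: `u ∈ N^{1,1}(X)` and `u = 0` outside `Ω`. -/
def MemN110 (μ : Measure X) (Ω : Set X) (u : X → ℝ) : Prop :=
  MemN11 μ Set.univ u ∧ ∀ x ∉ Ω, u x = 0

/-- The `1`-capacity `capa₁(A) = inf {‖u‖_{N^{1,1}(X)} : u ∈ N^{1,1}(X), u ≥ 1 on A}`. -/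
def capa1 (μ : Measure X) (A : Set X) : ℝ≥0∞ :=
  ⨅ (u : X → ℝ) (_ : MemN11 μ Set.univ u) (_ : ∀ x ∈ A, 1 ≤ u x), NNorm μ Set.univ u

/-- `U` is `1`-quasiopen: for every `ε > 0` there is an open `G` with `capa₁(G) < ε`
such that `U ∪ G` is open. -/
def QuasiOpen (μ : Measure X) (U : Set X) : Prop :=
  ∀ ε : ℝ, 0 < ε → ∃ G : Set X, IsOpen G ∧ capa1 μ G < ENNReal.ofReal ε ∧ IsOpen (U ∪ G)

/-- `u ∈ L¹_loc(A)`. -/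
def MemL1Loc (μ : Measure X) (A : Set X) (u : X → ℝ) : Prop :=
  AEMeasurable u (μ.restrict A) ∧
    ∀ x ∈ A, ∃ r > (0 : ℝ), (∫⁻ y in A ∩ Metric.ball x r, ENNReal.ofReal |u y| ∂μ) < ∞

/-- `v i → u` in `L¹_loc(A)`: every `x ∈ A` has a ball `B` with `v i → u` in `L¹(A ∩ B)`. -/
def L1LocConv (μ : Measure X) (A : Set X) (v : ℕ → X → ℝ) (u : X → ℝ) : Prop :=
  ∀ x ∈ A, ∃ r > (0 : ℝ),
    Filter.Tendsto (fun i => ∫⁻ y in A ∩ Metric.ball x r, ENNReal.ofReal |v i y - u y| ∂μ)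
      Filter.atTop (𝓝 0)

/-- `u` is locally Lipschitz on `Ω`. -/
def LocLipOn (u : X → ℝ) (Ω : Set X) : Prop :=
  ∀ x ∈ Ω, ∃ r > (0 : ℝ), ∃ K : ℝ≥0, LipschitzOnWith K u (Ω ∩ Metric.ball x r)

/-- The total variation `‖Du‖(Ω)` of `u` in an open set `Ω`: the infimum of
`liminf_i ∫_Ω g_{v i} dμ` over sequences of locally Lipschitz functions `v i → u`
in `L¹_loc(Ω)`, where `g_{v i}` is the minimal `1`-weak upper gradient of `v i` in `Ω`. -/
def tvOpen (μ : Measure X) (Ω : Set X) (u : X → ℝ) : ℝ≥0∞ :=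
  ⨅ (v : ℕ → X → ℝ) (g : ℕ → X → ℝ≥0∞) (_ : ∀ i, LocLipOn (v i) Ω)
    (_ : ∀ i, IsMinimalWUG μ (v i) (g i) Ω) (_ : L1LocConv μ Ω v u),
    Filter.liminf (fun i => ∫⁻ x in Ω, g i x ∂μ) Filter.atTop

/-- The total variation `‖Du‖(A)` of `u` in an arbitrary set `A`:
`inf {‖Du‖(Ω) : Ω ⊇ A open}`. -/
def tv (μ : Measure X) (A : Set X) (u : X → ℝ) : ℝ≥0∞ :=
  ⨅ (Ω : Set X) (_ : IsOpen Ω) (_ : A ⊆ Ω), tvOpen μ Ω u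

/-- The perimeter `P(E, A) = ‖Dχ_E‖(A)` for arbitrary `A`. -/
def perim (μ : Measure X) (E A : Set X) : ℝ≥0∞ :=
  tv μ A (Set.indicator E (fun _ => (1 : ℝ)))

/-- The perimeter `P(E, Ω) = ‖Dχ_E‖(Ω)` for open `Ω`. -/
def perimOpen (μ : Measure X) (E Ω : Set X) : ℝ≥0∞ :=
  tvOpen μ Ω (Set.indicator E (fun _ => (1 : ℝ)))

/-- The measure `μ` is doubling with constant `Cd`. -/
def Doubling (μ : Measure X) (Cd : ℝ) : Prop :=
  1 ≤ Cd ∧ ∀ (x : X) (r : ℝ), 0 < r →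
    0 < μ (Metric.ball x (2 * r)) ∧
      μ (Metric.ball x (2 * r)) ≤ ENNReal.ofReal Cd * μ (Metric.ball x r) ∧
      μ (Metric.ball x r) < ∞

/-- The space supports a `(1,1)`-Poincaré inequality with constants `CP, lam`. -/
def Poincare (μ : Measure X) (CP lam : ℝ) : Prop :=
  1 ≤ CP ∧ 1 ≤ lam ∧ ∀ (x : X) (r : ℝ), 0 < r → ∀ (u : X → ℝ) (g : X → ℝ≥0∞),
    MemL1Loc μ Set.univ u → IsUpperGradient u g →
      ENNReal.ofReal (⨍ y in Metric.ball x r, |u y - ⨍ z in Metric.ball x r, u z ∂μ| ∂μ)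
        ≤ ENNReal.ofReal (CP * r) *
            ((∫⁻ y in Metric.ball x (lam * r), g y ∂μ) / μ (Metric.ball x (lam * r)))

/-- The restricted spherical Hausdorff content of codimension one. -/
def HR (μ : Measure X) (R : ℝ) (A : Set X) : ℝ≥0∞ :=
  ⨅ (c : ℕ → X) (r : ℕ → ℝ) (_ : ∀ i, 0 < r i ∧ r i ≤ R)
    (_ : A ⊆ ⋃ i, Metric.ball (c i) (r i)),
    ∑' i, μ (Metric.ball (c i) (r i)) / ENNReal.ofReal (r i)

/-- The codimension-one Hausdorff measure `H(A) = lim_{R → 0} H_R(A)`. -/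
def Hcodim (μ : Measure X) (A : Set X) : ℝ≥0∞ :=
  ⨆ (R : ℝ) (_ : 0 < R), HR μ R A

/-- The lower approximate limit `u^∧`. -/
def lowerApprox (μ : Measure X) (u : X → ℝ) (x : X) : EReal :=
  sSup ((fun t : ℝ => (t : EReal)) ''
    {t : ℝ | Filter.Tendsto
      (fun r => μ (Metric.ball x r ∩ {y | u y < t}) / μ (Metric.ball x r))
      (𝓝[>] (0 : ℝ)) (𝓝 0)})

/-- The upper approximate limit `u^∨`. -/
def upperApprox (μ : Measure X) (u : X → ℝ) (x : X) : EReal :=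
  sInf ((fun t : ℝ => (t : EReal)) ''
    {t : ℝ | Filter.Tendsto
      (fun r => μ (Metric.ball x r ∩ {y | t < u y}) / μ (Metric.ball x r))
      (𝓝[>] (0 : ℝ)) (𝓝 0)})

/-- `u ∈ BV_loc(X)`: `u ∈ L¹_loc(X)` with `‖Du‖(Ω') < ∞` for every bounded open `Ω'`. -/
def MemBVLoc (μ : Measure X) (u : X → ℝ) : Prop :=
  MemL1Loc μ Set.univ u ∧
    ∀ Ω' : Set X, IsOpen Ω' → Bornology.IsBounded Ω' → tvOpen μ Ω' u < ∞

/-- The measure-theoretic interior `I_E`. -/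
def mInterior (μ : Measure X) (E : Set X) : Set X :=
  {x | Filter.Tendsto (fun r => μ (Metric.ball x r \ E) / μ (Metric.ball x r))
    (𝓝[>] (0 : ℝ)) (𝓝 0)}

/-- The measure-theoretic exterior `O_E`. -/
def mExterior (μ : Measure X) (E : Set X) : Set X :=
  {x | Filter.Tendsto (fun r => μ (Metric.ball x r ∩ E) / μ (Metric.ball x r))
    (𝓝[>] (0 : ℝ)) (𝓝 0)}

/-- The measure-theoretic boundary `∂*E`: the points where both `E` and its complement
have positive upper density. -/
def mBoundary (μ : Measure X) (E : Set X) : Set X :=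
  {x | 0 < Filter.limsup (fun r => μ (Metric.ball x r ∩ E) / μ (Metric.ball x r))
        (𝓝[>] (0 : ℝ)) ∧
       0 < Filter.limsup (fun r => μ (Metric.ball x r \ E) / μ (Metric.ball x r))
        (𝓝[>] (0 : ℝ))}


set_option linter.unusedSectionVars false

/-! ### One-dimensional facts -/

theorem ftc_bound {φ : ℝ → ℝ} {L : ℝ} (hL : 0 ≤ L) {K : ℝ≥0}
    (hφ : LipschitzOnWith K φ (Icc 0 L)) {G : ℝ → ℝ≥0∞}
    (hG : ∀ᵐ t ∂(volume.restrict (Icc 0 L)), ENNReal.ofReal |deriv φ t| ≤ G t) :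
    ENNReal.ofReal |φ 0 - φ L| ≤ ∫⁻ t in Icc 0 L, G t := by
  have hac : AbsolutelyContinuousOnInterval φ 0 L := by
    apply LipschitzOnWith.absolutelyContinuousOnInterval (K := K)
    rwa [uIcc_of_le hL]
  have h1 := hac.integral_deriv_eq_sub
  have h2 : |φ 0 - φ L| ≤ ∫ t in (0:ℝ)..L, |deriv φ t| := by
    rw [abs_sub_comm, ← h1]
    exact intervalIntegral.abs_integral_le_integral_abs hL
  have h3 : IntegrableOn (fun t => |deriv φ t|) (Icc 0 L) volume := by
    have := hac.intervalIntegrable_deriv.abs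
    rwa [intervalIntegrable_iff_integrableOn_Icc_of_le hL] at this
  calc ENNReal.ofReal |φ 0 - φ L| ≤ ENNReal.ofReal (∫ t in Icc (0:ℝ) L, |deriv φ t|) := by
        apply ENNReal.ofReal_le_ofReal
        rwa [intervalIntegral.integral_of_le hL, ← integral_Icc_eq_integral_Ioc] at h2
    _ = ∫⁻ t in Icc (0:ℝ) L, ENNReal.ofReal |deriv φ t| := by
        apply ofReal_integral_eq_lintegral_ofReal h3
        exact Eventually.of_forall fun t => abs_nonneg _
    _ ≤ _ := lintegral_mono_ae hG

theorem ae_Ioo_of_Icc {L : ℝ} {P : ℝ → Prop}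
    (h : ∀ᵐ t ∂(volume : Measure ℝ), t ∈ Ioo 0 L → P t) :
    ∀ᵐ t ∂(volume.restrict (Icc (0:ℝ) L)), P t := by
  rw [← Measure.restrict_congr_set (Ioo_ae_eq_Icc (μ := volume) (a := (0:ℝ)) (b := L))]
  rwa [ae_restrict_iff' measurableSet_Ioo]

theorem deriv_bound {φ : ℝ → ℝ} {L : ℝ} (hL : 0 ≤ L) {G : ℝ → ℝ≥0∞}
    (hGm : AEMeasurable G (volume.restrict (Icc 0 L)))
    (hGf : ∫⁻ t in Icc 0 L, G t < ∞)
    (hφ : ∀ s t, 0 ≤ s → s ≤ t → t ≤ L →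
      ENNReal.ofReal |φ s - φ t| ≤ ∫⁻ r in Icc s t, G r) :
    ∀ᵐ t ∂(volume.restrict (Icc 0 L)), ENNReal.ofReal |deriv φ t| ≤ G t := by
  have hint : IntegrableOn (fun t => (G t).toReal) (Icc 0 L) volume :=
    integrable_toReal_of_lintegral_ne_top hGm hGf.ne
  have hii : IntervalIntegrable (fun t => (G t).toReal) volume 0 L := by
    rwa [intervalIntegrable_iff_integrableOn_Icc_of_le hL]
  have hfin : ∀ᵐ t ∂(volume.restrict (Icc 0 L)), G t < ∞ := ae_lt_top' hGm hGf.ne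
  have hst : ∀ s t, 0 ≤ s → s ≤ t → t ≤ L →
      |φ s - φ t| ≤ ∫ r in s..t, (G r).toReal := by
    intro s t hs hst ht
    have hsub : Icc s t ⊆ Icc 0 L := Icc_subset_Icc hs ht
    have h1 := hφ s t hs hst ht
    have hlt : ∫⁻ r in Icc s t, G r < ∞ := (lintegral_mono_set hsub).trans_lt hGf
    rw [intervalIntegral.integral_of_le hst, ← integral_Icc_eq_integral_Ioc,
      integral_toReal (hGm.mono_measure (Measure.restrict_mono hsub le_rfl))
        (ae_mono (Measure.restrict_mono hsub le_rfl) hfin)]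
    exact (ENNReal.ofReal_le_iff_le_toReal hlt.ne).1 h1
  have hD := hii.ae_hasDerivAt_integral
  have hfin' := (ae_restrict_iff' measurableSet_Icc).1 hfin
  apply ae_Ioo_of_Icc
  filter_upwards [hD, hfin'] with t ht htf htI
  have htI' : t ∈ Icc 0 L := Ioo_subset_Icc_self htI
  have hd := ht (by rwa [uIcc_of_le hL]) 0 (by rw [uIcc_of_le hL]; exact ⟨le_rfl, hL⟩)
  by_cases hdiff : DifferentiableAt ℝ φ t
  swap
  · rw [deriv_zero_of_not_differentiableAt hdiff]; simp
  have hφd := hdiff.hasDerivAt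
  rw [← ENNReal.ofReal_toReal (htf htI').ne]
  apply ENNReal.ofReal_le_ofReal
  rw [hasDerivAt_iff_tendsto_slope] at hd hφd
  refine le_of_tendsto_of_tendsto (hφd.abs.mono_left (nhdsWithin_mono _ ?_ : 𝓝[>] t ≤ _))
    (hd.mono_left (nhdsWithin_mono _ ?_ : 𝓝[>] t ≤ _)) ?_
  · intro x hx; exact (ne_of_gt hx)
  · intro x hx; exact (ne_of_gt hx)
  · have : ∀ᶠ x in 𝓝[>] t, x ∈ Ioo t L := Ioo_mem_nhdsGT htI.2
    filter_upwards [this] with x hx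
    simp only [slope_def_field]
    rw [abs_div, abs_of_pos (sub_pos.2 hx.1)]
    apply div_le_div_of_nonneg_right _ (sub_pos.2 hx.1).le
    rw [abs_sub_comm]
    refine (hst t x htI.1.le hx.1.le hx.2.le).trans (le_of_eq ?_)
    rw [← intervalIntegral.integral_add_adjacent_intervals (a := 0) (b := t) (c := x)]
    · ring
    · exact hii.mono_set (by
        rw [uIcc_of_le hL, uIcc_of_le htI.1.le]; exact Icc_subset_Icc le_rfl htI.2.le)
    · exact hii.mono_set (by
        rw [uIcc_of_le hL, uIcc_of_le hx.1.le]; exact Icc_subset_Icc htI.1.le hx.2.le)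

/-! ### Curves and derivatives along curves -/

/-- A subcurve. -/
def Curve.sub (γ : Curve X) (s t : ℝ) (hs : 0 ≤ s) (hst : s ≤ t) (ht : t ≤ γ.len) : Curve X where
  len := t - s
  len_nonneg := by linarith
  toFun := fun r => γ.toFun (s + r)
  lip := by
    have h := γ.lip
    have h2 : LipschitzOnWith 1 (fun r : ℝ => s + r) (Icc 0 (t - s)) :=
      (LipschitzWith.of_dist_le_mul (by intro x y; simp)).lipschitzOnWith
    have := h.comp h2 (by intro r hr; exact ⟨by linarith [hr.1], by linarith [hr.2]⟩)
    simpa [Function.comp_def] using this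

theorem Curve.sub_integral (γ : Curve X) (s t : ℝ) (hs : 0 ≤ s) (hst : s ≤ t) (ht : t ≤ γ.len)
    (g : X → ℝ≥0∞) : (γ.sub s t hs hst ht).integral g = ∫⁻ r in Icc s t, g (γ.toFun r) := by
  unfold Curve.integral Curve.sub
  simp only
  have hmp : MeasurePreserving (fun r : ℝ => s + r) volume volume :=
    measurePreserving_add_left volume s
  have hemb : MeasurableEmbedding (fun r : ℝ => s + r) :=
    (MeasurableEquiv.addLeft s).measurableEmbedding
  have := hmp.setLIntegral_comp_preimage_emb hemb (fun r => g (γ.toFun r)) (Icc s t)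
  rw [← this]
  congr 2
  ext r; simp [le_sub_iff_add_le']

theorem Curve.sub_in (γ : Curve X) (s t : ℝ) (hs : 0 ≤ s) (hst : s ≤ t) (ht : t ≤ γ.len)
    {A : Set X} (h : γ.In A) : (γ.sub s t hs hst ht).In A := by
  intro r hr
  have hr1 : (0:ℝ) ≤ r := hr.1
  have hr2 : r ≤ t - s := hr.2
  exact h (s + r) ⟨by linarith, by linarith⟩

theorem Curve.aemeasurable_comp (γ : Curve X) {g : X → ℝ≥0∞} (hg : Measurable g) :
    AEMeasurable (fun t => g (γ.toFun t)) (volume.restrict (Icc 0 γ.len)) :=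
  hg.comp_aemeasurable (γ.lip.continuousOn.aemeasurable measurableSet_Icc)

theorem Curve.lip_comp (γ : Curve X) {Ω : Set X} (hγ : γ.In Ω) {v : X → ℝ}
    (hv : LocLipOn v Ω) : ∃ K : ℝ≥0, LipschitzOnWith K (v ∘ γ.toFun) (Icc 0 γ.len) := by
  apply LocallyLipschitzOn.exists_lipschitzOnWith_of_compact isCompact_Icc
  intro t ht
  obtain ⟨r, hr, K, hK⟩ := hv _ (hγ t ht)
  refine ⟨K, Icc 0 γ.len ∩ γ.toFun ⁻¹' (ball (γ.toFun t) r), ?_, ?_⟩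
  · apply Filter.inter_mem self_mem_nhdsWithin
    exact γ.lip.continuousOn t ht (ball_mem_nhds _ hr)
  · have := hK.comp (γ.lip.mono (inter_subset_left
      (t := γ.toFun ⁻¹' (ball (γ.toFun t) r)))) (by
        intro s hs; exact ⟨hγ s hs.1, hs.2⟩)
    simpa using this

/-- Bound of the derivative along almost every curve. -/
def DUG (μ : Measure X) (v : X → ℝ) (g : X → ℝ≥0∞) (Ω : Set X) : Prop :=
  ∃ ρ : X → ℝ≥0∞, Measurable ρ ∧ (∫⁻ x, ρ x ∂μ) < ∞ ∧
    ∀ γ : Curve X, γ.In Ω → γ.integral ρ ≠ ∞ →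
      ∀ᵐ t ∂(volume.restrict (Icc 0 γ.len)),
        ENNReal.ofReal |deriv (v ∘ γ.toFun) t| ≤ g (γ.toFun t)

theorem DUG.wug {μ : Measure X} {v : X → ℝ} {g : X → ℝ≥0∞} {Ω : Set X}
    (hv : LocLipOn v Ω) (hg : AEMeasurable g μ) (h : DUG μ v g Ω) :
    IsWeakUpperGradientOn μ v g Ω := by
  obtain ⟨ρ, hρm, hρf, hρ⟩ := h
  refine ⟨hg, ρ, hρm, hρf, ?_⟩
  rintro γ ⟨hγ, hn⟩
  by_contra hne
  apply hn
  obtain ⟨K, hK⟩ := γ.lip_comp hγ hv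
  exact ftc_bound γ.len_nonneg hK (hρ γ hγ hne)

/-- Countable unions of exceptional families. -/
theorem exists_common_rho {ι : Type*} [Countable ι] {μ : Measure X} (ρ : ι → X → ℝ≥0∞) (hm : ∀ n, Measurable (ρ n))
    (hf : ∀ n, ∫⁻ x, ρ n x ∂μ < ∞) :
    ∃ ρ' : X → ℝ≥0∞, Measurable ρ' ∧ (∫⁻ x, ρ' x ∂μ) < ∞ ∧
      ∀ γ : Curve X, γ.integral ρ' ≠ ∞ → ∀ n, γ.integral (ρ n) ≠ ∞ := by
  obtain ⟨ε, hε0, hε⟩ := ENNReal.exists_pos_tsum_mul_lt_of_countable (ε := 1) one_ne_zero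
    (fun n => ∫⁻ x, ρ n x ∂μ) (fun n => (hf n).ne)
  refine ⟨fun x => ∑' n, ρ n x * ε n, ?_, ?_, ?_⟩
  · exact Measurable.ennreal_tsum fun n => (hm n).mul_const _
  · rw [lintegral_tsum (fun n => ((hm n).mul_const _).aemeasurable)]
    simp_rw [lintegral_mul_const _ (hm _)]
    exact hε.trans ENNReal.one_lt_top
  · intro γ hγ n hn
    apply hγ
    have h1 : γ.integral (fun x => ρ n x * ε n) = ∞ := by
      unfold Curve.integral at hn ⊢
      rw [lintegral_mul_const'' _ (γ.aemeasurable_comp (hm n)), hn]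
      exact ENNReal.top_mul (by simpa using (hε0 n).ne')
    refine top_le_iff.1 (h1 ▸ ?_)
    exact lintegral_mono fun t => ENNReal.le_tsum (f := fun n => ρ n (γ.toFun t) * ε n) n


theorem wug_dug [SecondCountableTopology X] {μ : Measure X} {v : X → ℝ} {g : X → ℝ≥0∞}
    {Ω : Set X} (hΩ : IsOpen Ω)
    (h : IsWeakUpperGradientOn μ v g Ω) (hloc : LIntegrableLocOn μ g Ω) : DUG μ v g Ω := by
  obtain ⟨hgm, ρ0, hρ0m, hρ0f, hρ0⟩ := h
  set gm := hgm.mk g with hgmdef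
  have hgmm : Measurable gm := hgm.measurable_mk
  set N := toMeasurable μ {x | g x ≠ gm x} with hN
  have hNm : MeasurableSet N := measurableSet_toMeasurable _ _
  have hN0 : μ N = 0 := by
    rw [hN, measure_toMeasurable]; exact hgm.ae_eq_mk
  choose! r hr hrf using hloc
  obtain ⟨S, hSΩ, hSc, hcov⟩ := TopologicalSpace.countable_cover_nhdsWithin
    (s := Ω) (f := fun x => ball x (r x))
    (fun x hx => mem_nhdsWithin_of_mem_nhds (ball_mem_nhds x (hr x hx)))
  have : Countable S := hSc
  let ρ : Option (Option S) → X → ℝ≥0∞ := fun o =>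
    match o with
    | none => ρ0
    | some none => N.indicator (fun _ => ∞)
    | some (some k) => (Ω ∩ ball (k : X) (r k)).indicator gm
  obtain ⟨ρ', hρ'm, hρ'f, hρ'⟩ := exists_common_rho (μ := μ) ρ
    (by
      rintro (_ | _ | k)
      · exact hρ0m
      · exact measurable_const.indicator hNm
      · exact hgmm.indicator (hΩ.inter isOpen_ball).measurableSet)
    (by
      rintro (_ | _ | k)
      · exact hρ0f
      · simp only [ρ]
        rw [lintegral_indicator hNm]; simp [hN0]
      · simp only [ρ]
        rw [lintegral_indicator (hΩ.inter isOpen_ball).measurableSet]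
        refine lt_of_eq_of_lt ?_ (hrf k (hSΩ k.2))
        exact lintegral_congr_ae (ae_restrict_of_ae hgm.ae_eq_mk.symm))
  refine ⟨ρ', hρ'm, hρ'f, ?_⟩
  intro γ hγ hfin
  have h1 := hρ' γ hfin
  have hne := h1 none
  have hnN := h1 (some none)
  -- a.e. on the curve `g = gm`
  have hae : ∀ᵐ t ∂(volume.restrict (Icc 0 γ.len)), g (γ.toFun t) = gm (γ.toFun t) := by
    have h2 := ae_lt_top' (γ.aemeasurable_comp
      (g := N.indicator (fun _ => (∞ : ℝ≥0∞))) (measurable_const.indicator hNm)) hnN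
    filter_upwards [h2] with t ht
    by_contra hcon
    have : γ.toFun t ∈ N := subset_toMeasurable _ _ hcon
    rw [indicator_of_mem this] at ht
    exact lt_irrefl _ ht
  have hGfin : ∫⁻ t in Icc 0 γ.len, gm (γ.toFun t) < ∞ := by
    have hcomp : IsCompact (γ.toFun '' Icc 0 γ.len) :=
      isCompact_Icc.image_of_continuousOn γ.lip.continuousOn
    obtain ⟨F, hF⟩ := hcomp.elim_finite_subcover (fun k : S => ball (k : X) (r k))
      (fun k => isOpen_ball) (by
        rintro _ ⟨t, ht, rfl⟩
        obtain ⟨k, hk, hk2⟩ := mem_iUnion₂.1 (hcov (hγ t ht))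
        exact mem_iUnion.2 ⟨⟨k, hk⟩, hk2⟩)
    calc ∫⁻ t in Icc 0 γ.len, gm (γ.toFun t)
        ≤ ∫⁻ t in Icc 0 γ.len, ∑ k ∈ F, ρ (some (some k)) (γ.toFun t) := by
          apply setLIntegral_mono' measurableSet_Icc
          intro t ht
          obtain ⟨k, hk, hk2⟩ := mem_iUnion₂.1 (hF ⟨t, ht, rfl⟩)
          refine le_trans ?_ (Finset.single_le_sum
            (f := fun k => ρ (some (some k)) (γ.toFun t)) (fun _ _ => zero_le) hk)
          simp only [ρ]
          rw [indicator_of_mem (show γ.toFun t ∈ Ω ∩ ball (k : X) (r k) from ⟨hγ t ht, hk2⟩)]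
      _ = ∑ k ∈ F, ∫⁻ t in Icc 0 γ.len, ρ (some (some k)) (γ.toFun t) := by
          apply lintegral_finsetSum'
          intro k _
          exact γ.aemeasurable_comp (hgmm.indicator (hΩ.inter isOpen_ball).measurableSet)
      _ < ∞ := by
          rw [ENNReal.sum_lt_top]
          intro k _
          exact lt_top_iff_ne_top.2 (h1 (some (some k)))
  have hkey := deriv_bound (φ := v ∘ γ.toFun) γ.len_nonneg (γ.aemeasurable_comp hgmm) hGfin (by
    intro s t hs hst ht
    have hsub : Icc s t ⊆ Icc 0 γ.len := Icc_subset_Icc hs ht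
    have hug : UGIneq v g (γ.sub s t hs hst ht) := by
      by_contra hcon
      have := hρ0 _ ⟨γ.sub_in s t hs hst ht hγ, hcon⟩
      rw [γ.sub_integral] at this
      apply hne
      refine top_le_iff.1 (this ▸ ?_)
      exact lintegral_mono_set hsub
    unfold UGIneq at hug
    rw [γ.sub_integral] at hug
    simp only [Curve.sub, add_zero, add_sub_cancel] at hug
    refine hug.trans (le_of_eq ?_)
    exact lintegral_congr_ae (ae_mono (Measure.restrict_mono hsub le_rfl) hae))
  filter_upwards [hkey, hae] with t h2 h3
  rw [h3]; exact h2

theorem DUG.iInf {ι : Type*} [Countable ι] {μ : Measure X} {v : X → ℝ} {g : ι → X → ℝ≥0∞}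
    {Ω : Set X} (h : ∀ n, DUG μ v (g n) Ω) : DUG μ v (fun x => ⨅ n, g n x) Ω := by
  choose ρ hm hf hρ using h
  obtain ⟨ρ', hρ'm, hρ'f, hρ'⟩ := exists_common_rho (μ := μ) ρ hm hf
  refine ⟨ρ', hρ'm, hρ'f, fun γ hγ hfin => ?_⟩
  have := fun n => hρ n γ hγ (hρ' γ hfin n)
  filter_upwards [ae_all_iff.2 this] with t ht
  exact le_iInf ht

theorem DUG.mono_set {μ : Measure X} {v : X → ℝ} {g : X → ℝ≥0∞}
    {Ω U : Set X} (h : DUG μ v g Ω) (hU : U ⊆ Ω) : DUG μ v g U := by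
  obtain ⟨ρ, a, b, c⟩ := h
  exact ⟨ρ, a, b, fun γ hγ => c γ (fun t ht => hU (hγ t ht))⟩

theorem exists_min [SecondCountableTopology X] {μ : Measure X} [SigmaFinite μ] {v : X → ℝ}
    {Ω : Set X} (hΩ : IsOpen Ω) (hv : LocLipOn v Ω) :
    ∃ g : X → ℝ≥0∞, IsMinimalWUG μ v g Ω ∧
      ∀ g', AEMeasurable g' μ → DUG μ v g' Ω → ∀ᵐ x ∂μ, g x ≤ g' x := by
  let F : Set (X → ℝ≥0∞) := {g | AEMeasurable g μ ∧ DUG μ v g Ω}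
  let ν := μ.toFinite
  let Φ : (X → ℝ≥0∞) → ℝ≥0∞ := fun g => ∫⁻ x, (1 + g x)⁻¹ ∂ν
  have hΦle : ∀ g, Φ g ≤ ν univ := by
    intro g
    calc Φ g ≤ ∫⁻ x, 1 ∂ν := lintegral_mono fun x => by
          rw [ENNReal.inv_le_one]; exact le_self_add
      _ = ν univ := by simp
  have hne : (Φ '' F).Nonempty := by
    refine ⟨_, fun _ => ∞, ⟨measurable_const.aemeasurable, fun _ => 0, measurable_const, by simp, ?_⟩, rfl⟩
    intro γ _ _
    exact Eventually.of_forall fun t => le_top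
  obtain ⟨s, -, hs, hsF⟩ := exists_seq_tendsto_sSup hne (OrderTop.bddAbove _)
  choose gn hgF hgs using hsF
  let g : X → ℝ≥0∞ := fun x => ⨅ n, gn n x
  have hgm : AEMeasurable g μ := AEMeasurable.iInf fun n => (hgF n).1
  have hgd : DUG μ v g Ω := DUG.iInf fun n => (hgF n).2
  have hS : sSup (Φ '' F) ≤ Φ g := by
    refine le_of_tendsto hs (Eventually.of_forall fun n => ?_)
    rw [← hgs n]
    refine lintegral_mono fun x => ?_
    simp only [ENNReal.inv_le_inv]
    gcongr
    exact iInf_le (fun n => gn n x) n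
  have key : ∀ g', AEMeasurable g' μ → DUG μ v g' Ω → ∀ᵐ x ∂μ, g x ≤ g' x := by
    intro g' hg'm hg'd
    let k : X → ℝ≥0∞ := fun x => ⨅ b : Bool, (if b then g else g') x
    have hkm : AEMeasurable k μ := AEMeasurable.iInf fun b => by cases b <;> simp [hgm, hg'm]
    have hkd : DUG μ v k Ω := DUG.iInf fun b => by cases b <;> simp [hgd, hg'd]
    have hkS : Φ k ≤ Φ g := (le_sSup (mem_image_of_mem Φ (show k ∈ F from ⟨hkm, hkd⟩))).trans hS
    have habs : ν ≪ μ := toFinite_absolutelyContinuous μ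
    have hae := ae_eq_of_ae_le_of_lintegral_le (μ := ν)
      (f := fun x => (1 + g x)⁻¹) (g := fun x => (1 + k x)⁻¹)
      (Eventually.of_forall fun x => by
        simp only [ENNReal.inv_le_inv]
        gcongr
        exact iInf_le (fun b : Bool => (if b then g else g') x) true)
      ((hΦle g).trans_lt (measure_lt_top ν _)).ne
      ((aemeasurable_const.add (hkm.mono_ac habs)).inv) hkS
    have hae' := (absolutelyContinuous_toFinite μ).ae_le hae
    filter_upwards [hae'] with x hx
    have hx1 : g x = k x := by
      have := inv_injective hx
      exact (ENNReal.add_right_inj ENNReal.one_ne_top).1 this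
    rw [hx1]
    exact iInf_le (fun b : Bool => (if b then g else g') x) false
  refine ⟨g, ⟨hgd.wug hv hgm, ?_⟩, key⟩
  intro g' hg' hloc
  exact ae_restrict_of_ae (key g' hg'.1 (wug_dug hΩ hg' hloc))


/-! ### Lower semicontinuous functions and chains -/

theorem lsc_approx {h : X → ℝ≥0∞} (hh : LowerSemicontinuous h) :
    ∃ hn : ℕ → X → ℝ, (∀ n : ℕ, LipschitzWith n (hn n)) ∧ (∀ n x, 0 ≤ hn n x) ∧
      (∀ m n, m ≤ n → ∀ x, hn m x ≤ hn n x) ∧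
      (∀ x, ⨆ n, ENNReal.ofReal (hn n x) = h x) := by
  let H : ℕ → X → ℝ≥0∞ := fun n x => ⨅ y, (min (h y) n + n * edist x y)
  have hHle : ∀ n x, H n x ≤ min (h x) n := by
    intro n x
    refine (iInf_le _ x).trans ?_
    simp
  have hHtop : ∀ n x, H n x ≠ ∞ := fun n x =>
    ((hHle n x).trans (min_le_right _ _)).trans_lt (ENNReal.natCast_lt_top n) |>.ne
  have hmono : ∀ m n, m ≤ n → ∀ x, H m x ≤ H n x := by
    intro m n hmn x
    refine iInf_mono fun y => ?_
    gcongr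
  refine ⟨fun n x => (H n x).toReal, ?_, fun n x => ENNReal.toReal_nonneg, ?_, ?_⟩
  · intro n
    apply LipschitzWith.of_le_add_mul
    intro x y
    have h1 : H n x ≤ H n y + n * edist x y := by
      simp only [H]
      rw [ENNReal.iInf_add]
      refine le_iInf fun z => (iInf_le _ z).trans ?_
      rw [add_assoc, ← mul_add]
      gcongr
      rw [add_comm]
      exact edist_triangle x y z
    have h2 : (n : ℝ≥0∞) * edist x y ≠ ∞ := ENNReal.mul_ne_top (by simp) (edist_ne_top x y)
    have h3 := ENNReal.toReal_mono (ENNReal.add_ne_top.2 ⟨hHtop n y, h2⟩) h1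
    rw [ENNReal.toReal_add (hHtop n y) h2, ENNReal.toReal_mul, edist_dist,
      ENNReal.toReal_ofReal dist_nonneg] at h3
    simpa using h3
  · intro m n hmn x
    exact ENNReal.toReal_mono (hHtop n x) (hmono m n hmn x)
  · intro x
    simp_rw [ENNReal.ofReal_toReal (hHtop _ _)]
    apply le_antisymm (iSup_le fun n => (hHle n x).trans (min_le_left _ _))
    refine le_of_forall_lt fun a ha => ?_
    obtain ⟨b, hab, hb⟩ := exists_between ha
    refine lt_of_lt_of_le hab ?_
    have hnb := hh x b hb
    obtain ⟨r, hr, hball⟩ := Metric.eventually_nhds_iff.1 hnb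
    have hbt : b ≠ ∞ := (hb.trans_le le_top).ne
    obtain ⟨n, hn⟩ := exists_nat_gt (max b.toReal (b.toReal / r))
    refine le_trans ?_ (le_iSup _ n)
    refine le_iInf fun y => ?_
    have hbn : b ≤ n := by
      rw [← ENNReal.ofReal_toReal hbt, ← ENNReal.ofReal_natCast]
      exact ENNReal.ofReal_le_ofReal ((le_max_left _ _).trans hn.le)
    by_cases hy : dist y x < r
    · refine le_trans ?_ le_self_add
      exact le_min (hball hy).le hbn
    · refine le_trans ?_ le_add_self
      rw [edist_dist, ← ENNReal.ofReal_natCast, ← ENNReal.ofReal_mul (by positivity),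
        ← ENNReal.ofReal_toReal hbt]
      apply ENNReal.ofReal_le_ofReal
      have h1 : b.toReal / r < n := (le_max_right _ _).trans_lt hn
      rw [div_lt_iff₀ hr] at h1
      rw [dist_comm x y]
      push Not at hy
      exact h1.le.trans (by gcongr)

/-- Set of chains from `x` with steps at most `ε`. -/
def Chains (ε : ℝ) (x : X) : Type _ :=
  {q : (ℕ → X) × ℕ // q.1 0 = x ∧ ∀ i < q.2, dist (q.1 i) (q.1 (i + 1)) ≤ ε}

/-- The cost of a chain. -/
def chainCost (h W : X → ℝ) (p : ℕ → X) (N : ℕ) : ℝ :=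
  W (p N) + ∑ i ∈ Finset.range N, h (p i) * dist (p i) (p (i + 1))

/-- Minimal cost of a chain. -/
def chainF (ε : ℝ) (h W : X → ℝ) (x : X) : ℝ :=
  ⨅ q : Chains ε x, chainCost h W q.1.1 q.1.2

theorem chainCost_nonneg {h W : X → ℝ} (hh : ∀ x, 0 ≤ h x) (hW : ∀ x, 0 ≤ W x) (p : ℕ → X)
    (N : ℕ) : 0 ≤ chainCost h W p N :=
  add_nonneg (hW _) (Finset.sum_nonneg fun i _ => mul_nonneg (hh _) dist_nonneg)

theorem chain_bdd {h W : X → ℝ} (hh : ∀ x, 0 ≤ h x) (hW : ∀ x, 0 ≤ W x) (ε : ℝ) (x : X) :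
    BddBelow (range fun q : Chains ε x => chainCost h W q.1.1 q.1.2) :=
  ⟨0, by rintro _ ⟨q, rfl⟩; exact chainCost_nonneg hh hW _ _⟩

instance (ε : ℝ) (x : X) : Nonempty (Chains ε x) :=
  ⟨⟨(fun _ => x, 0), rfl, by simp⟩⟩

theorem chainF_nonneg {h W : X → ℝ} (hh : ∀ x, 0 ≤ h x) (hW : ∀ x, 0 ≤ W x) (ε : ℝ) (x : X) :
    0 ≤ chainF ε h W x :=
  le_ciInf fun _ => chainCost_nonneg hh hW _ _

theorem chainF_le {h W : X → ℝ} (hh : ∀ x, 0 ≤ h x) (hW : ∀ x, 0 ≤ W x) (ε : ℝ) (x : X) :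
    chainF ε h W x ≤ W x := by
  refine (ciInf_le (chain_bdd hh hW ε x) ⟨(fun _ => x, 0), rfl, by simp⟩).trans ?_
  simp [chainCost]

theorem chainF_step {h W : X → ℝ} (hh : ∀ x, 0 ≤ h x) (hW : ∀ x, 0 ≤ W x) {ε : ℝ} {x y : X}
    (hxy : dist x y ≤ ε) : chainF ε h W x ≤ h x * dist x y + chainF ε h W y := by
  rw [← sub_le_iff_le_add']
  refine le_ciInf fun q => ?_
  obtain ⟨⟨p, N⟩, hp0, hp⟩ := q
  simp only at hp0 hp ⊢
  rw [sub_le_iff_le_add']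
  let p' : ℕ → X := fun k => Nat.casesOn k x p
  refine (ciInf_le (chain_bdd hh hW ε x) ⟨(p', N + 1), rfl, ?_⟩).trans ?_
  · intro i hi
    rcases i with _ | i
    · simpa [p', hp0] using hxy
    · exact hp i (by simpa using hi)
  · simp only [chainCost]
    rw [Finset.sum_range_succ']
    have e0 : p' 0 = x := rfl
    have e1 : ∀ k, p' (k + 1) = p k := fun _ => rfl
    simp only [e0, e1, hp0]
    linarith

theorem chainF_mono {h W h' W' : X → ℝ} (hh : ∀ x, 0 ≤ h x) (hW : ∀ x, 0 ≤ W x)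
    (hh' : ∀ x, h x ≤ h' x) (hW' : ∀ x, W x ≤ W' x) {ε ε' : ℝ} (hε : ε' ≤ ε) (x : X) :
    chainF ε h W x ≤ chainF ε' h' W' x := by
  refine le_ciInf fun q => ?_
  obtain ⟨⟨p, N⟩, hp0, hp⟩ := q
  refine (ciInf_le (chain_bdd hh hW ε x) ⟨(p, N), hp0, fun i hi => (hp i hi).trans hε⟩).trans ?_
  simp only [chainCost]
  gcongr with i hi
  · exact hW' _
  · exact hh' _

theorem chainF_lt {h W : X → ℝ} {ε b : ℝ} {x : X} (hb : chainF ε h W x < b) :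
    ∃ (p : ℕ → X) (N : ℕ), p 0 = x ∧ (∀ i < N, dist (p i) (p (i + 1)) ≤ ε) ∧
      chainCost h W p N < b := by
  obtain ⟨⟨⟨p, N⟩, h1, h2⟩, h3⟩ := exists_lt_of_ciInf_lt hb
  exact ⟨p, N, h1, h2, h3⟩

/-- Parametrization of a chain by length. -/
theorem chain_param (p : ℕ → X) (N : ℕ) {ε : ℝ} (hε : 0 ≤ ε)
    (hp : ∀ i < N, dist (p i) (p (i + 1)) ≤ ε) :
    ∃ γ : ℝ → X, γ (∑ i ∈ Finset.range N, dist (p i) (p (i + 1))) = p N ∧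
      (∀ t, 0 ≤ t → dist (p 0) (γ t) ≤ t) ∧
      (∀ t t', 0 ≤ t → t ≤ t' → dist (γ t) (γ t') ≤ t' - t + ε) ∧
      (∀ G : X → ℝ, (∀ x, 0 ≤ G x) →
        ∫⁻ t in Ico 0 (∑ i ∈ Finset.range N, dist (p i) (p (i + 1))), ENNReal.ofReal (G (γ t))
          ≤ ENNReal.ofReal (∑ i ∈ Finset.range N, G (p i) * dist (p i) (p (i + 1)))) := by
  let s : ℕ → ℝ := fun k => ∑ i ∈ Finset.range k, dist (p i) (p (i + 1))
  have hs0 : s 0 = 0 := by simp [s]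
  have hss : ∀ k, s (k + 1) = s k + dist (p k) (p (k + 1)) := fun k => by
    simp [s, Finset.sum_range_succ]
  have hsm : Monotone s := monotone_nat_of_le_succ fun k => by
    rw [hss]; linarith [dist_nonneg (x := p k) (y := p (k + 1))]
  have hsd : ∀ j k, j ≤ k → dist (p j) (p k) ≤ s k - s j := by
    intro j k hjk
    induction k, hjk using Nat.le_induction with
    | base => simp
    | succ k _ ih =>
      have := dist_triangle (p j) (p k) (p (k + 1))
      rw [hss]; linarith
  classical
  let idx : ℝ → ℕ := fun t => Nat.findGreatest (fun k => s k ≤ t) N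
  have hidx1 : ∀ t, 0 ≤ t → s (idx t) ≤ t := by
    intro t ht
    exact Nat.findGreatest_spec (P := fun k => s k ≤ t) (Nat.zero_le N) (by simpa [hs0] using ht)
  have hidxN : ∀ t, idx t ≤ N := fun t => Nat.findGreatest_le N
  have hidx2 : ∀ t k, k ≤ N → s k ≤ t → k ≤ idx t := fun t k hk h =>
    Nat.le_findGreatest hk h
  have hidx3 : ∀ t, idx t < N → t < s (idx t + 1) := by
    intro t ht
    by_contra hcon
    push Not at hcon
    have := hidx2 t _ ht hcon
    omega
  have hidxm : Monotone idx := fun t t' htt =>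
    Nat.findGreatest_mono (P := fun k => s k ≤ t) (Q := fun k => s k ≤ t')
      (fun k hk => le_trans hk htt) le_rfl
  have hidxs : ∀ k < N, ∀ t ∈ Ico (s k) (s (k + 1)), idx t = k := by
    intro k hk t ht
    apply le_antisymm _ (hidx2 t k hk.le ht.1)
    by_contra hcon
    push Not at hcon
    have h1 : s (k + 1) ≤ s (idx t) := hsm hcon
    have h0 : 0 ≤ s k := hs0 ▸ hsm (Nat.zero_le k)
    have h2 := hidx1 t (h0.trans ht.1)
    linarith [ht.2]
  refine ⟨fun t => p (idx t), ?_, ?_, ?_, ?_⟩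
  · have : idx (s N) = N := le_antisymm (hidxN _) (hidx2 _ _ le_rfl le_rfl)
    change p (idx (s N)) = p N
    rw [this]
  · intro t ht
    have := hsd 0 (idx t) (Nat.zero_le _)
    rw [hs0] at this
    simp only
    linarith [hidx1 t ht]
  · intro t t' ht htt
    have h1 := hsd _ _ (hidxm htt)
    rcases (hidxN t).lt_or_eq with h | h
    · have h2 := hidx3 t h
      rw [hss] at h2
      have h3 := hp _ h
      have h4 := hidx1 t' (ht.trans htt)
      simp only
      linarith
    · have h5 : idx t' = N := le_antisymm (hidxN _) (h ▸ hidxm htt)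
      simp only [h, h5, dist_self]
      linarith
  · intro G hG
    have key : ∀ k ≤ N, ∫⁻ t in Ico 0 (s k), ENNReal.ofReal (G (p (idx t)))
        ≤ ENNReal.ofReal (∑ i ∈ Finset.range k, G (p i) * dist (p i) (p (i + 1))) := by
      intro k
      induction k with
      | zero => intro _; simp [hs0]
      | succ k ih =>
        intro hk
        have h0 : 0 ≤ s k := hs0 ▸ hsm (Nat.zero_le k)
        rw [← Ico_union_Ico_eq_Ico h0 (hsm (Nat.le_succ k)), Finset.sum_range_succ,
          ENNReal.ofReal_add (Finset.sum_nonneg fun i _ => mul_nonneg (hG _) dist_nonneg)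
            (mul_nonneg (hG _) dist_nonneg)]
        refine (lintegral_union_le _ _ _).trans (add_le_add (ih (by omega)) ?_)
        have : ∫⁻ t in Ico (s k) (s (k + 1)), ENNReal.ofReal (G (p (idx t)))
            = ∫⁻ t in Ico (s k) (s (k + 1)), ENNReal.ofReal (G (p k)) := by
          apply setLIntegral_congr_fun measurableSet_Ico
          intro t ht
          simp only [hidxs k (by omega) t ht]
        rw [this, setLIntegral_const, Real.volume_Ico, hss, add_sub_cancel_left,
          ← ENNReal.ofReal_mul (hG _)]
    exact key N le_rfl


/-- Limits of chains: the chain functions converge from below to at least `w`. -/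
theorem chain_limit [ProperSpace X] {hn Wn : ℕ → X → ℝ}
    (hL : ∀ n : ℕ, LipschitzWith n (hn n)) (h0 : ∀ n x, 0 ≤ hn n x)
    (hmono : ∀ m n, m ≤ n → ∀ x, hn m x ≤ hn n x)
    (WL : ∀ n : ℕ, LipschitzWith n (Wn n)) (W0 : ∀ n x, 0 ≤ Wn n x)
    (Wmono : ∀ m n, m ≤ n → ∀ x, Wn m x ≤ Wn n x)
    {w : X → ℝ} (hwW : ∀ x, ENNReal.ofReal (w x) ≤ ⨆ n, ENNReal.ofReal (Wn n x))
    (hwh : ∀ x, ENNReal.ofReal (w x) ≤ ⨆ n, ENNReal.ofReal (hn n x))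
    (hug : ∀ γ : Curve X, UGIneq w (fun x => ⨆ n, ENNReal.ofReal (hn n x)) γ)
    (z : X) {a : ℝ} (ha : a < w z) :
    ∃ n : ℕ, a < chainF (1 / ((n : ℝ) + 1)) (hn n) (Wn n) z := by
  by_contra hcon
  push Not at hcon
  set h : X → ℝ≥0∞ := fun x => ⨆ n, ENNReal.ofReal (hn n x) with hh
  have ha0 : 0 ≤ a := (chainF_nonneg (h0 0) (W0 0) _ z).trans (hcon 0)
  obtain ⟨b, hab, hb⟩ := exists_between ha
  have hb0 : 0 < b := ha0.trans_lt hab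
  have hε0 : ∀ n : ℕ, (0:ℝ) ≤ 1 / ((n : ℝ) + 1) := fun n => by positivity
  choose p N hp0 hp hcost using fun n => chainF_lt ((hcon n).trans_lt hab)
  choose γ hγe hγ0 hγd hγi using fun n => chain_param (p n) (N n) (hε0 n) (hp n)
  set ℓ : ℕ → ℝ := fun n => ∑ i ∈ Finset.range (N n), dist (p n i) (p n (i + 1)) with hℓ
  set C : ℕ → ℝ := fun n => ∑ i ∈ Finset.range (N n), hn n (p n i) * dist (p n i) (p n (i + 1))
    with hC
  have hC0 : ∀ n, 0 ≤ C n := fun n =>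
    Finset.sum_nonneg fun i _ => mul_nonneg (h0 _ _) dist_nonneg
  have hcost' : ∀ n, Wn n (p n (N n)) + C n < b := hcost
  have hCb : ∀ n, C n ≤ b := fun n => by linarith [hcost' n, W0 n (p n (N n))]
  have hℓ0 : ∀ n, 0 ≤ ℓ n := fun n => Finset.sum_nonneg fun i _ => dist_nonneg
  set κ := w z - b with hκ
  have hκ0 : 0 < κ := sub_pos.2 hb
  set T := (b + 1) / κ with hT
  have hT0 : 0 < T := by positivity
  let U : Ultrafilter ℕ := hyperfilter ℕ
  have hU : (U : Filter ℕ) ≤ atTop := by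
    rw [← Nat.cofinite_eq_atTop]; exact hyperfilter_le_cofinite
  -- limits along the ultrafilter
  have hΓ : ∀ t, 0 ≤ t → ∃ y ∈ closedBall z t, Tendsto (fun n => γ n t) U (𝓝 y) := by
    intro t ht
    have := (isCompact_closedBall z t).ultrafilter_le_nhds (U.map fun n => γ n t) (by
      rw [Ultrafilter.coe_map, le_principal_iff, mem_map]
      refine Eventually.of_forall fun n => ?_
      have := hγ0 n t ht
      rw [hp0] at this
      simpa [dist_comm] using this)
    obtain ⟨y, hy, hy2⟩ := this
    exact ⟨y, hy, hy2⟩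
  have : Nonempty X := ⟨z⟩
  choose! Γ hΓb hΓ using hΓ
  have hlimR : ∀ (f : ℕ → ℝ) (B : ℝ), (∀ n, f n ∈ Icc 0 B) →
      ∃ y ∈ Icc 0 B, Tendsto f U (𝓝 y) := by
    intro f B hf
    obtain ⟨y, hy, hy2⟩ := (isCompact_Icc (a := (0:ℝ)) (b := B)).ultrafilter_le_nhds (U.map f) (by
      rw [Ultrafilter.coe_map, le_principal_iff, mem_map]
      exact Eventually.of_forall hf)
    exact ⟨y, hy, hy2⟩
  obtain ⟨c, ⟨hc0, hcb⟩, hc⟩ := hlimR C b fun n => ⟨hC0 n, hCb n⟩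
  obtain ⟨L, ⟨hL0, hLT⟩, hLlim⟩ := hlimR (fun n => min (ℓ n) T) T
    fun n => ⟨le_min (hℓ0 n) hT0.le, min_le_right _ _⟩
  have hεlim : Tendsto (fun n : ℕ => 1 / ((n : ℝ) + 1)) U (𝓝 0) :=
    tendsto_one_div_add_atTop_nhds_zero_nat.mono_left hU
  have hΓ0 : Γ 0 = z := by
    have := hΓb 0 le_rfl
    simpa using this
  have hΓd : ∀ t t', 0 ≤ t → t ≤ t' → dist (Γ t) (Γ t') ≤ t' - t := by
    intro t t' ht htt
    have h1 : Tendsto (fun n => dist (γ n t) (γ n t')) U (𝓝 (dist (Γ t) (Γ t'))) :=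
      (hΓ t ht).dist (hΓ t' (ht.trans htt))
    have h2 : Tendsto (fun n : ℕ => t' - t + 1 / ((n : ℝ) + 1)) U (𝓝 (t' - t)) := by
      simpa using hεlim.const_add (t' - t)
    exact le_of_tendsto_of_tendsto h1 h2 (Eventually.of_forall fun n => hγd n t t' ht htt)
  have hΓlip : LipschitzOnWith 1 Γ (Icc 0 L) := by
    apply LipschitzOnWith.of_dist_le_mul
    intro x hx y hy
    simp only [NNReal.coe_one, one_mul]
    rcases le_total x y with hxy | hxy
    · rw [Real.dist_eq, abs_sub_comm, abs_of_nonneg (sub_nonneg.2 hxy)]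
      exact hΓd x y hx.1 hxy
    · rw [Real.dist_eq, abs_of_nonneg (sub_nonneg.2 hxy), dist_comm]
      exact hΓd y x hy.1 hxy
  let cγ : Curve X := ⟨L, hL0, Γ, hΓlip⟩
  -- uniform convergence
  have hunif : ∀ η > 0, ∀ᶠ n in (U : Filter ℕ), ∀ t ∈ Icc 0 T, dist (γ n t) (Γ t) ≤ η := by
    intro η hη
    obtain ⟨M, hM⟩ := exists_nat_gt (T / (η / 4))
    have h1 : ∀ᶠ n in (U : Filter ℕ), ∀ k ∈ Finset.range (M + 1),
        dist (γ n (k * (η / 4))) (Γ (k * (η / 4))) < η / 4 := by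
      rw [Filter.eventually_all_finset]
      intro k _
      exact Metric.tendsto_nhds.1 (hΓ (k * (η / 4)) (by positivity)) _ (by positivity)
    have h2 : ∀ᶠ n : ℕ in (U : Filter ℕ), 1 / ((n : ℝ) + 1) < η / 4 :=
      hεlim.eventually_lt_const (by positivity)
    filter_upwards [h1, h2] with n hn1 hn2 t ht
    set k := ⌊t / (η / 4)⌋₊ with hk
    have hη4 : 0 < η / 4 := by positivity
    have hk1 : k * (η / 4) ≤ t := by
      rw [← le_div_iff₀ hη4]
      exact Nat.floor_le (div_nonneg ht.1 hη4.le)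
    have hk2 : t < (k + 1) * (η / 4) := by
      rw [← div_lt_iff₀ hη4]
      exact Nat.lt_floor_add_one _
    have hkM : k ∈ Finset.range (M + 1) := by
      rw [Finset.mem_range]
      have : (k : ℝ) < M := by
        refine lt_of_le_of_lt ?_ hM
        refine (Nat.floor_le (div_nonneg ht.1 hη4.le)).trans ?_
        exact div_le_div_of_nonneg_right ht.2 hη4.le
      have : k < M := by exact_mod_cast this
      omega
    have e1 := hn1 k hkM
    have e2 := hγd n (k * (η / 4)) t (by positivity) hk1
    have e3 := hΓd (k * (η / 4)) t (by positivity) hk1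
    have e4 := dist_triangle4 (γ n t) (γ n (k * (η / 4))) (Γ (k * (η / 4))) (Γ t)
    rw [dist_comm (γ n t)] at e4
    have e5 := dist_comm (Γ t) (γ n t)
    have e6 := dist_comm (γ n t) (γ n (k * (η / 4)))
    linarith
  -- the energy of the limit curve
  have hen : ∀ m : ℕ, ∫⁻ t in Icc 0 L, ENNReal.ofReal (hn m (Γ t)) ≤ ENNReal.ofReal c := by
    intro m
    set B := hn m z + m * T with hB
    have hB0 : 0 ≤ B := add_nonneg (h0 _ _) (by positivity)
    have hlim : Tendsto (fun η : ℝ => ENNReal.ofReal (c + η + m * η * T + B * η)) (𝓝[>] 0)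
        (𝓝 (ENNReal.ofReal c)) := by
      apply ENNReal.tendsto_ofReal
      have : Continuous fun η : ℝ => c + η + m * η * T + B * η := by fun_prop
      have h2 := this.tendsto 0
      simp only [mul_zero, zero_mul, add_zero] at h2
      exact h2.mono_left nhdsWithin_le_nhds
    refine ge_of_tendsto hlim ?_
    filter_upwards [self_mem_nhdsWithin] with η hη
    have hη : 0 < η := hη
    have e1 := hunif η hη
    have e2 : ∀ᶠ n in (U : Filter ℕ), C n < c + η := hc.eventually_lt_const (by linarith)
    have e3 : ∀ᶠ n in (U : Filter ℕ), L - η < min (ℓ n) T :=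
      hLlim.eventually_const_lt (by linarith)
    have e4 : ∀ᶠ n in (U : Filter ℕ), m ≤ n := hU (eventually_ge_atTop m)
    obtain ⟨n, hn1, hn2, hn3, hn4⟩ := (e1.and (e2.and (e3.and e4))).exists
    set l := min (ℓ n) T with hl
    have hl0 : 0 ≤ l := le_min (hℓ0 n) hT0.le
    have hsub : Icc 0 L ⊆ (Ico 0 l) ∪ Icc l L := by
      intro t ht
      rcases lt_or_ge t l with h | h
      · exact Or.inl ⟨ht.1, h⟩
      · exact Or.inr ⟨h, ht.2⟩
    have hmη : 0 ≤ (m : ℝ) * η := by positivity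
    calc ∫⁻ t in Icc 0 L, ENNReal.ofReal (hn m (Γ t))
        ≤ ∫⁻ t in (Ico 0 l) ∪ Icc l L, ENNReal.ofReal (hn m (Γ t)) := lintegral_mono_set hsub
      _ ≤ (∫⁻ t in Ico 0 l, ENNReal.ofReal (hn m (Γ t))) +
          ∫⁻ t in Icc l L, ENNReal.ofReal (hn m (Γ t)) := lintegral_union_le _ _ _
      _ ≤ (∫⁻ t in Ico 0 l, (ENNReal.ofReal (hn m (γ n t)) + ENNReal.ofReal (m * η))) +
          ∫⁻ t in Icc l L, ENNReal.ofReal B := by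
          gcongr ?_ + ?_
          · apply setLIntegral_mono' measurableSet_Ico
            intro t ht
            rw [← ENNReal.ofReal_add (h0 _ _) hmη]
            apply ENNReal.ofReal_le_ofReal
            have h1 := (hL m).dist_le_mul (γ n t) (Γ t)
            have h2 := hn1 t ⟨ht.1, ht.2.le.trans (min_le_right _ _)⟩
            have h3 : (m : ℝ) * dist (γ n t) (Γ t) ≤ m * η := by gcongr
            rw [Real.dist_eq] at h1
            simp only [NNReal.coe_natCast] at h1
            linarith [abs_le.1 (h1.trans h3)]
          · apply setLIntegral_mono' measurableSet_Icc
            intro t ht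
            apply ENNReal.ofReal_le_ofReal
            have ht0 : 0 ≤ t := hl0.trans ht.1
            have h1 := (hL m).dist_le_mul (Γ t) z
            have h2 : dist (Γ t) z ≤ T := (hΓb t ht0).trans (ht.2.trans hLT)
            have h3 : (m : ℝ) * dist (Γ t) z ≤ m * T := by gcongr
            rw [Real.dist_eq] at h1
            simp only [NNReal.coe_natCast] at h1
            linarith [abs_le.1 (h1.trans h3)]
      _ ≤ (ENNReal.ofReal (C n) + ENNReal.ofReal (m * η * T)) + ENNReal.ofReal (B * η) := by
          gcongr ?_ + ?_
          · rw [lintegral_add_right _ measurable_const]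
            gcongr ?_ + ?_
            · calc ∫⁻ t in Ico 0 l, ENNReal.ofReal (hn m (γ n t))
                  ≤ ∫⁻ t in Ico 0 (ℓ n), ENNReal.ofReal (hn m (γ n t)) :=
                    lintegral_mono_set (Ico_subset_Ico_right (min_le_left _ _))
                _ ≤ _ := hγi n (hn m) (h0 m)
                _ ≤ ENNReal.ofReal (C n) := by
                    apply ENNReal.ofReal_le_ofReal
                    apply Finset.sum_le_sum
                    intro i _
                    exact mul_le_mul_of_nonneg_right (hmono m n hn4 _) dist_nonneg
            · rw [setLIntegral_const, Real.volume_Ico, ← ENNReal.ofReal_mul hmη]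
              apply ENNReal.ofReal_le_ofReal
              have : l - 0 ≤ T := by rw [sub_zero]; exact min_le_right _ _
              gcongr
          · rw [setLIntegral_const, Real.volume_Icc, ← ENNReal.ofReal_mul hB0]
            apply ENNReal.ofReal_le_ofReal
            have : L - l ≤ η := by linarith
            gcongr
      _ = ENNReal.ofReal (C n + m * η * T + B * η) := by
          rw [← ENNReal.ofReal_add (hC0 n) (by positivity),
            ← ENNReal.ofReal_add (add_nonneg (hC0 n) (by positivity)) (by positivity)]
      _ ≤ _ := by
          apply ENNReal.ofReal_le_ofReal
          linarith
  have hen' : ∫⁻ t in Icc 0 L, h (Γ t) ≤ ENNReal.ofReal c := by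
    simp only [hh]
    rw [lintegral_iSup']
    · exact iSup_le hen
    · intro n
      exact ENNReal.measurable_ofReal.comp_aemeasurable
        (((hL n).continuous.comp_continuousOn hΓlip.continuousOn).aemeasurable measurableSet_Icc)
    · exact Eventually.of_forall fun t m n hmn => ENNReal.ofReal_le_ofReal (hmono m n hmn _)
  have hwΓ : ∀ t ∈ Icc 0 L, w z - w (Γ t) ≤ c := by
    intro t ht
    have h1 := hug (cγ.sub 0 t le_rfl ht.1 ht.2)
    unfold UGIneq at h1
    rw [cγ.sub_integral] at h1
    simp only [Curve.sub, sub_zero, zero_add, cγ, hΓ0] at h1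
    have h2 := h1.trans ((lintegral_mono_set (Icc_subset_Icc_right ht.2)).trans hen')
    exact (le_abs_self _).trans ((ENNReal.ofReal_le_ofReal_iff hc0).1 h2)
  rcases U.em (fun n => ℓ n ≤ T) with hcase | hcase
  · -- the chains have bounded length
    have hlℓ : Tendsto ℓ U (𝓝 L) := by
      refine hLlim.congr' ?_
      filter_upwards [hcase] with n hn1
      exact min_eq_left hn1
    have hpy : Tendsto (fun n => p n (N n)) U (𝓝 (Γ L)) := by
      rw [tendsto_iff_dist_tendsto_zero]
      have hbd : ∀ n, dist (p n (N n)) (Γ L) ≤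
          (|ℓ n - L| + 1 / ((n : ℝ) + 1)) + dist (γ n L) (Γ L) := by
        intro n
        refine (dist_triangle _ (γ n L) _).trans ?_
        gcongr
        rw [← hγe n]
        rcases le_total (ℓ n) L with hle | hle
        · rw [abs_sub_comm, abs_of_nonneg (sub_nonneg.2 hle)]
          exact hγd n _ _ (hℓ0 n) hle
        · rw [abs_of_nonneg (sub_nonneg.2 hle), dist_comm]
          exact hγd n _ _ hL0 hle
      refine squeeze_zero (fun n => dist_nonneg) hbd ?_
      have h1 : Tendsto (fun n => |ℓ n - L|) U (𝓝 0) := by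
        have := (hlℓ.sub_const L).abs
        simpa using this
      have h2 := tendsto_iff_dist_tendsto_zero.1 (hΓ L hL0)
      simpa using (h1.add hεlim).add h2
    have hWy : ∀ m, Wn m (Γ L) ≤ b - c := by
      intro m
      have h1 : Tendsto (fun n => Wn m (p n (N n))) U (𝓝 (Wn m (Γ L))) :=
        ((WL m).continuous.tendsto _).comp hpy
      have h2 : Tendsto (fun n => b - C n) U (𝓝 (b - c)) := hc.const_sub b
      refine le_of_tendsto_of_tendsto h1 h2 ?_
      filter_upwards [hU (eventually_ge_atTop m)] with n hmn
      linarith [Wmono m n hmn (p n (N n)), hcost' n]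
    have hwy : w (Γ L) ≤ b - c := by
      have h1 : ENNReal.ofReal (w (Γ L)) ≤ ENNReal.ofReal (b - c) :=
        (hwW (Γ L)).trans (iSup_le fun m => ENNReal.ofReal_le_ofReal (hWy m))
      exact (ENNReal.ofReal_le_ofReal_iff (by linarith)).1 h1
    have := hwΓ L ⟨hL0, le_rfl⟩
    linarith
  · have hLeq : L = T := by
      refine tendsto_nhds_unique hLlim ?_
      refine tendsto_const_nhds.congr' ?_
      filter_upwards [hcase] with n hn1
      exact (min_eq_right (not_le.1 hn1).le).symm
    have h1 : ENNReal.ofReal (κ * T) ≤ ENNReal.ofReal c := by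
      refine le_trans ?_ hen'
      have : ∫⁻ t in Icc 0 L, ENNReal.ofReal κ = ENNReal.ofReal (κ * T) := by
        rw [setLIntegral_const, Real.volume_Icc, ← ENNReal.ofReal_mul hκ0.le, hLeq, sub_zero]
      rw [← this]
      apply setLIntegral_mono' measurableSet_Icc
      intro t ht
      refine le_trans (ENNReal.ofReal_le_ofReal ?_) (hwh (Γ t))
      linarith [hwΓ t ht]
    have h2 := (ENNReal.ofReal_le_ofReal_iff hc0).1 h1
    have h3 : κ * T = b + 1 := by rw [hT]; field_simp
    linarith


namespace Doubling

theorem ball_pos {μ : Measure X} {Cd : ℝ} (h : Doubling μ Cd) (x : X) {r : ℝ} (hr : 0 < r) :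
    0 < μ (ball x r) := by
  have := (h.2 x (r / 2) (by positivity)).1
  rwa [mul_div_cancel₀ r two_ne_zero] at this

theorem ball_lt_top {μ : Measure X} {Cd : ℝ} (h : Doubling μ Cd) (x : X) (r : ℝ) :
    μ (ball x r) < ∞ := by
  rcases le_or_gt r 0 with hr | hr
  · rw [ball_eq_empty.2 hr]; simp
  · exact (h.2 x r hr).2.2

theorem ball_pow {μ : Measure X} {Cd : ℝ} (h : Doubling μ Cd) (x : X) {r : ℝ} (hr : 0 < r) (k : ℕ) :
    μ (ball x (2 ^ k * r)) ≤ ENNReal.ofReal Cd ^ k * μ (ball x r) := by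
  induction k with
  | zero => simp
  | succ k ih =>
    rw [pow_succ, mul_comm (2 ^ k) 2, mul_assoc]
    refine (h.2 x (2 ^ k * r) (by positivity)).2.1.trans ?_
    calc _ ≤ ENNReal.ofReal Cd * (ENNReal.ofReal Cd ^ k * μ (ball x r)) := by gcongr
      _ = _ := by rw [pow_succ]; ring

theorem proper [CompleteSpace X] {μ : Measure X} {Cd : ℝ} (h : Doubling μ Cd) : ProperSpace X := by
  refine ⟨fun x R => isCompact_iff_totallyBounded_isComplete.2 ⟨?_, isClosed_closedBall.isComplete⟩⟩
  rw [Metric.totallyBounded_iff]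
  intro ε hε
  obtain ⟨u, hut, hdisj, hcov⟩ := Vitali.exists_disjoint_subfamily_covering_enlargement_closedBall
    (closedBall x R) (fun y : X => y) (fun _ => ε / 10) (ε / 10) (fun _ _ => le_rfl) 5 (by norm_num)
  refine ⟨u, ?_, ?_⟩
  · obtain ⟨k, hk⟩ := pow_unbounded_of_one_lt ((2 * |R| + 2 * ε) / (ε / 10)) (one_lt_two (α := ℝ))
    rw [div_lt_iff₀ (by positivity)] at hk
    have hbig : 0 < μ (ball x (|R| + ε)) := h.ball_pos x (by positivity)
    have hR := le_abs_self R
    have hfin : ENNReal.ofReal Cd ^ k ≠ ∞ := by finiteness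
    have := Measure.finite_const_le_meas_of_disjoint_iUnion μ
      (ε := μ (ball x (|R| + ε)) / ENNReal.ofReal Cd ^ k)
      (ENNReal.div_pos hbig.ne' hfin)
      (As := fun i : u => ball (i : X) (ε / 10)) (fun i => measurableSet_ball)
      (fun i j hij => (hdisj i.2 j.2 (fun h => hij (Subtype.ext h))).mono
        ball_subset_closedBall ball_subset_closedBall) (by
        refine ne_top_of_le_ne_top (h.ball_lt_top x (|R| + ε)).ne (measure_mono ?_)
        refine iUnion_subset fun i => ball_subset_ball' ?_
        have := hut i.2
        rw [mem_closedBall] at this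
        linarith)
    have huniv : {i : u | μ (ball x (|R| + ε)) / ENNReal.ofReal Cd ^ k ≤ μ (ball (i : X) (ε / 10))}
        = univ := by
      refine eq_univ_of_forall fun i => ?_
      refine ENNReal.div_le_of_le_mul' ?_
      refine le_trans (measure_mono ?_) (h.ball_pow (i : X) (by positivity) k)
      apply ball_subset_ball'
      have := hut i.2
      rw [mem_closedBall, dist_comm] at this
      linarith
    rw [huniv] at this
    exact Set.finite_coe_iff.1 (Set.finite_univ_iff.1 this)
  · intro a ha
    obtain ⟨b, hb, hab⟩ := hcov a ha
    simp only [mem_iUnion, exists_prop]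
    refine ⟨b, hb, ?_⟩
    have := hab (mem_closedBall_self (by positivity))
    rw [mem_closedBall] at this
    rw [mem_ball]
    linarith

theorem locFin {μ : Measure X} {Cd : ℝ} (h : Doubling μ Cd) : IsLocallyFiniteMeasure μ :=
  ⟨fun x => ⟨ball x 1, ball_mem_nhds x one_pos, h.ball_lt_top x 1⟩⟩

theorem unifLoc {μ : Measure X} {Cd : ℝ} (h : Doubling μ Cd) : IsUnifLocDoublingMeasure μ := by
  refine ⟨⟨(Cd.toNNReal) ^ 2, ?_⟩⟩
  filter_upwards [self_mem_nhdsWithin] with ε hε x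
  have hε' : 0 < ε := hε
  calc μ (closedBall x (2 * ε)) ≤ μ (ball x (2 ^ 2 * ε)) :=
        measure_mono (closedBall_subset_ball (by linarith))
    _ ≤ _ := h.ball_pow x hε' 2
    _ ≤ _ := by
      rw [ENNReal.coe_pow]
      exact mul_le_mul' le_rfl (measure_mono ball_subset_closedBall)

end Doubling


theorem chainF_osc {h W : X → ℝ} (hh : ∀ x, 0 ≤ h x) (hW : ∀ x, 0 ≤ W x) {ε : ℝ} (x y : X)
    (hxy : dist x y ≤ ε) :
    |chainF ε h W x - chainF ε h W y| ≤ max (h x) (h y) * dist x y := by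
  have h1 := chainF_step hh hW hxy
  have h2 := chainF_step hh hW (ε := ε) (x := y) (y := x) (by rwa [dist_comm])
  rw [dist_comm y x] at h2
  have h3 : h x * dist x y ≤ max (h x) (h y) * dist x y :=
    mul_le_mul_of_nonneg_right (le_max_left _ _) dist_nonneg
  have h4 : h y * dist x y ≤ max (h x) (h y) * dist x y :=
    mul_le_mul_of_nonneg_right (le_max_right _ _) dist_nonneg
  rw [abs_le]
  constructor <;> linarith

theorem osc_loclip {F h : X → ℝ} {ε : ℝ} (hε : 0 < ε) (hc : Continuous h) (h0 : ∀ x, 0 ≤ h x)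
    (H : ∀ x y, dist x y ≤ ε → |F x - F y| ≤ max (h x) (h y) * dist x y) : LocLipOn F univ := by
  intro x _
  obtain ⟨r, hr, hr2⟩ := Metric.continuousAt_iff.1 (hc.continuousAt (x := x)) 1 one_pos
  refine ⟨min r (ε / 2), by positivity, ⟨h x + 1, by linarith [h0 x]⟩, ?_⟩
  refine LipschitzOnWith.of_dist_le_mul fun y hy z hz => ?_
  have hy1 := hy.2
  have hz1 := hz.2
  rw [mem_ball, lt_min_iff] at hy1 hz1
  have a1 := hr2 hy1.1
  have a2 := hr2 hz1.1
  rw [Real.dist_eq, abs_lt] at a1 a2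
  rw [Real.dist_eq]
  refine (H y z ?_).trans ?_
  · have := dist_triangle_right y z x
    linarith
  · refine mul_le_mul_of_nonneg_right ?_ dist_nonneg
    change max (h y) (h z) ≤ h x + 1
    exact max_le (by linarith) (by linarith)

theorem osc_deriv {F h : X → ℝ} {ε : ℝ} (hε : 0 < ε) (hc : Continuous h) (h0 : ∀ x, 0 ≤ h x)
    (H : ∀ x y, dist x y ≤ ε → |F x - F y| ≤ max (h x) (h y) * dist x y) (γ : Curve X) :
    ∀ᵐ t ∂(volume.restrict (Icc 0 γ.len)),
      ENNReal.ofReal |deriv (F ∘ γ.toFun) t| ≤ ENNReal.ofReal (h (γ.toFun t)) := by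
  refine ae_Ioo_of_Icc (Eventually.of_forall fun t ht => ENNReal.ofReal_le_ofReal ?_)
  refine le_of_forall_pos_le_add fun η hη => ?_
  have hcγ : ContinuousAt (h ∘ γ.toFun) t :=
    (hc.comp_continuousOn γ.lip.continuousOn).continuousAt (Icc_mem_nhds ht.1 ht.2)
  have e1 : ∀ᶠ s in 𝓝 t, dist ((h ∘ γ.toFun) s) ((h ∘ γ.toFun) t) < η :=
    Metric.tendsto_nhds.1 hcγ η hη
  have e2 : ∀ᶠ s in 𝓝 t, dist s t < ε := Metric.ball_mem_nhds t hε
  have e3 : ∀ᶠ s in 𝓝 t, s ∈ Icc 0 γ.len := Icc_mem_nhds ht.1 ht.2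
  have := norm_deriv_le_of_lip' (f := F ∘ γ.toFun) (x₀ := t) (C := h (γ.toFun t) + η)
    (by linarith [h0 (γ.toFun t)]) (by
      filter_upwards [e1, e2, e3] with s h1 h2 h3
      have h4 : dist (γ.toFun s) (γ.toFun t) ≤ dist s t := by
        have := γ.lip.dist_le_mul s h3 t ⟨ht.1.le, ht.2.le⟩
        simpa using this
      rw [Real.dist_eq, abs_lt] at h1
      simp only [Function.comp] at h1
      simp only [Function.comp, Real.norm_eq_abs]
      refine (H _ _ (h4.trans h2.le)).trans ?_
      rw [← Real.dist_eq s t]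
      have h5 := h0 (γ.toFun t)
      refine mul_le_mul (max_le (by linarith) (by linarith)) h4 dist_nonneg (by linarith))
  simpa using this

theorem osc_ug {F h : X → ℝ} {ε : ℝ} (hε : 0 < ε) (hc : Continuous h) (h0 : ∀ x, 0 ≤ h x)
    (H : ∀ x y, dist x y ≤ ε → |F x - F y| ≤ max (h x) (h y) * dist x y) :
    IsUpperGradient F (fun x => ENNReal.ofReal (h x)) := by
  refine ⟨ENNReal.measurable_ofReal.comp hc.measurable, fun γ => ?_⟩
  obtain ⟨K, hK⟩ := γ.lip_comp (fun _ _ => mem_univ _) (osc_loclip hε hc h0 H)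
  exact ftc_bound γ.len_nonneg hK (osc_deriv hε hc h0 H γ)

theorem LocLipOn.continuous {F : X → ℝ} (h : LocLipOn F univ) : Continuous F := by
  rw [continuous_iff_continuousAt]
  intro x
  obtain ⟨r, hr, K, hK⟩ := h x (mem_univ _)
  rw [univ_inter] at hK
  exact hK.continuousOn.continuousAt (ball_mem_nhds x hr)


theorem avg_step [ProperSpace X] {μ : Measure X} [IsLocallyFiniteMeasure μ] {f : X → ℝ}
    (hf : Continuous f) {z z' : X} {r r' D : ℝ} (c : ℝ)
    (hsub : ball z' r' ⊆ ball z r) (hpos : 0 < μ (ball z' r'))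
    (hD : μ (ball z r) ≤ ENNReal.ofReal D * μ (ball z' r')) (hD0 : 0 ≤ D) :
    |(⨍ y in ball z' r', f y ∂μ) - c| ≤ D * ⨍ y in ball z r, |f y - c| ∂μ := by
  have hfinb : ∀ (a : X) (s : ℝ), μ (ball a s) ≠ ∞ := fun a s =>
    (measure_mono ball_subset_closedBall |>.trans_lt (isCompact_closedBall a s).measure_lt_top).ne
  have hint : ∀ (a : X) (s : ℝ) (F : X → ℝ), Continuous F → IntegrableOn F (ball a s) μ :=
    fun a s F hF => (hF.locallyIntegrable.integrableOn_isCompact (isCompact_closedBall a s)).mono_set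
      ball_subset_closedBall
  have hp' : 0 < μ.real (ball z' r') := ENNReal.toReal_pos hpos.ne' (hfinb _ _)
  have hp : 0 < μ.real (ball z r) :=
    ENNReal.toReal_pos (hpos.trans_le (measure_mono hsub)).ne' (hfinb _ _)
  have hDr : μ.real (ball z r) ≤ D * μ.real (ball z' r') := by
    have := ENNReal.toReal_mono (ENNReal.mul_ne_top ENNReal.ofReal_ne_top (hfinb _ _)) hD
    rwa [ENNReal.toReal_mul, ENNReal.toReal_ofReal hD0] at this
  rw [setAverage_eq, setAverage_eq, smul_eq_mul, smul_eq_mul]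
  have e1 : (μ.real (ball z' r'))⁻¹ * (∫ y in ball z' r', f y ∂μ) - c =
      (μ.real (ball z' r'))⁻¹ * ∫ y in ball z' r', (f y - c) ∂μ := by
    rw [integral_sub (hint _ _ _ hf) (hint _ _ _ continuous_const), setIntegral_const, smul_eq_mul]
    field_simp
  have hcabs : Continuous fun y => |f y - c| := (hf.sub continuous_const).abs
  have e2 : |∫ y in ball z' r', (f y - c) ∂μ| ≤ ∫ y in ball z r, |f y - c| ∂μ := by
    refine (abs_integral_le_integral_abs).trans ?_
    exact setIntegral_mono_set (hint _ _ _ hcabs) (Eventually.of_forall fun y => abs_nonneg _)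
      (LE.le.eventuallyLE hsub)
  have hI : 0 ≤ ∫ y in ball z r, |f y - c| ∂μ := integral_nonneg fun y => abs_nonneg _
  rw [e1, abs_mul, abs_of_pos (inv_pos.2 hp')]
  calc _ ≤ (μ.real (ball z' r'))⁻¹ * ∫ y in ball z r, |f y - c| ∂μ := by gcongr
    _ ≤ (D * (μ.real (ball z r))⁻¹) * ∫ y in ball z r, |f y - c| ∂μ := by
      refine mul_le_mul_of_nonneg_right ?_ hI
      rw [inv_le_iff_one_le_mul₀ hp', mul_assoc, mul_comm, mul_assoc, inv_mul_eq_div, one_le_div hp]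
      linarith
    _ = _ := by ring

theorem avg_poin [ProperSpace X] {μ : Measure X} [IsLocallyFiniteMeasure μ] {CP lam : ℝ}
    (hP : Poincare μ CP lam) {f : X → ℝ}
    (hf : Continuous f) {h : X → ℝ≥0∞} (hh : IsUpperGradient f h) {z z' : X} {r r' D t : ℝ}
    (hr : 0 < r) (ht : 0 ≤ t)
    (hsub : ball z' r' ⊆ ball z r) (hpos : 0 < μ (ball z' r'))
    (hD : μ (ball z r) ≤ ENNReal.ofReal D * μ (ball z' r')) (hD0 : 0 ≤ D)
    (hmax : (∫⁻ y in ball z (lam * r), h y ∂μ) / μ (ball z (lam * r)) ≤ ENNReal.ofReal t) :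
    |(⨍ y in ball z' r', f y ∂μ) - ⨍ y in ball z r, f y ∂μ| ≤ D * (CP * r * t) := by
  refine (avg_step hf _ hsub hpos hD hD0).trans ?_
  refine mul_le_mul_of_nonneg_left ?_ hD0
  have hL1 : MemL1Loc μ univ f := by
    refine ⟨hf.measurable.aemeasurable, fun x _ => ⟨1, one_pos, ?_⟩⟩
    rw [univ_inter]
    have : IntegrableOn f (ball x 1) μ :=
      (hf.locallyIntegrable.integrableOn_isCompact (isCompact_closedBall x 1)).mono_set
        ball_subset_closedBall
    have := this.2
    rw [hasFiniteIntegral_iff_norm] at this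
    exact this
  have := hP.2.2 z r hr f h hL1 hh
  have hc : 0 ≤ CP := by linarith [hP.1]
  rw [← ENNReal.ofReal_le_ofReal_iff (by positivity)]
  refine this.trans ?_
  rw [ENNReal.ofReal_mul (p := CP * r) (by positivity)]
  exact mul_le_mul' le_rfl hmax

/-- Telescoping estimate at a point. -/
theorem poin_tele [ProperSpace X] {μ : Measure X} [IsLocallyFiniteMeasure μ] {Cd CP lam : ℝ}
    (hd : Doubling μ Cd) (hP : Poincare μ CP lam) {f : X → ℝ}
    (hf : Continuous f) {h : X → ℝ≥0∞} (hh : IsUpperGradient f h) {z : X} {r t : ℝ}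
    (hr : 0 < r) (ht : 0 ≤ t)
    (hmax : ∀ s, 0 < s → s ≤ lam * r →
      (∫⁻ y in ball z s, h y ∂μ) / μ (ball z s) ≤ ENNReal.ofReal t) :
    |f z - ⨍ y in ball z r, f y ∂μ| ≤ 2 * Cd * CP * r * t := by
  have hCd := hd.1
  have hCP := hP.1
  have hlam := hP.2.1
  let a : ℕ → ℝ := fun k => ⨍ y in ball z (r / 2 ^ k), f y ∂μ
  have hstep : ∀ k, |a (k + 1) - a k| ≤ Cd * CP * r * t / 2 ^ k := by
    intro k
    have hk : 0 < r / 2 ^ k := by positivity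
    have hk1 : r / 2 ^ k = 2 * (r / 2 ^ (k + 1)) := by rw [pow_succ]; field_simp
    have := avg_poin (z := z) (z' := z) (r := r / 2 ^ k) (r' := r / 2 ^ (k + 1)) (D := Cd) hP hf hh
      hk ht (ball_subset_ball (by rw [hk1]; linarith [show 0 < r / 2 ^ (k + 1) by positivity]))
      (hd.ball_pos z (by positivity)) (by
        rw [hk1]; exact (hd.2 z _ (by positivity)).2.1) (by linarith)
      (hmax _ (by positivity) (by
        gcongr
        exact div_le_self hr.le (one_le_pow₀ one_le_two)))
    refine this.trans (le_of_eq ?_)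
    ring
  have hlim : Tendsto a atTop (𝓝 (f z)) := by
    rw [Metric.tendsto_atTop]
    intro η hη
    obtain ⟨δ, hδ, hδ2⟩ := Metric.continuousAt_iff.1 (hf.continuousAt (x := z)) (η / 2) (by positivity)
    have : Tendsto (fun k : ℕ => r / 2 ^ k) atTop (𝓝 0) := by
      have := (tendsto_pow_atTop_nhds_zero_of_lt_one (r := (1/2:ℝ)) (by norm_num) (by norm_num)).const_mul r
      simpa [div_eq_mul_inv] using this
    obtain ⟨N, hN⟩ := Metric.tendsto_atTop.1 this δ hδ
    refine ⟨N, fun k hk => ?_⟩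
    have hrk : 0 < r / 2 ^ k := by positivity
    have hk2 := hN k hk
    rw [Real.dist_eq, sub_zero, abs_of_pos hrk] at hk2
    have h1 := avg_step (μ := μ) hf (z := z) (z' := z) (r := r / 2 ^ k) (r' := r / 2 ^ k) (D := 1) (f z)
      subset_rfl (hd.ball_pos z hrk) (by simp) zero_le_one
    rw [Real.dist_eq]
    refine h1.trans_lt ?_
    rw [one_mul]
    have hp : 0 < μ.real (ball z (r / 2 ^ k)) :=
      ENNReal.toReal_pos (hd.ball_pos z hrk).ne' (hd.ball_lt_top z _).ne
    have h2 : ∫ y in ball z (r / 2 ^ k), |f y - f z| ∂μ ≤ ∫ y in ball z (r / 2 ^ k), η / 2 ∂μ := by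
      refine setIntegral_mono_on ?_ ?_ measurableSet_ball fun y hy => ?_
      · exact (((hf.sub continuous_const).abs).locallyIntegrable.integrableOn_isCompact
          (isCompact_closedBall z _)).mono_set ball_subset_closedBall
      · exact (continuous_const.locallyIntegrable.integrableOn_isCompact
          (isCompact_closedBall z _)).mono_set ball_subset_closedBall
      · exact (hδ2 ((mem_ball.1 hy).trans hk2)).le
    rw [setIntegral_const, smul_eq_mul] at h2
    rw [setAverage_eq, smul_eq_mul]
    calc _ ≤ (μ.real (ball z (r / 2 ^ k)))⁻¹ * (μ.real (ball z (r / 2 ^ k)) * (η / 2)) := by gcongr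
      _ = η / 2 := by field_simp
      _ < η := by linarith
  have hsum : ∀ n, |a n - a 0| ≤ 2 * Cd * CP * r * t := by
    intro n
    have hle : |a n - a 0| ≤ ∑ k ∈ Finset.range n, |a (k + 1) - a k| := by
      rw [← Finset.sum_range_sub]
      exact Finset.abs_sum_le_sum_abs _ _
    have hc0 : 0 ≤ Cd * CP * r * t := by positivity
    have hge : ∑ k ∈ Finset.range n, Cd * CP * r * t / 2 ^ k ≤ 2 * Cd * CP * r * t := by
      have : ∑ k ∈ Finset.range n, (1 / 2 : ℝ) ^ k ≤ 2 := by
        have := sum_geometric_two_le n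
        exact this
      calc _ = Cd * CP * r * t * ∑ k ∈ Finset.range n, (1 / 2 : ℝ) ^ k := by
            rw [Finset.mul_sum]
            refine Finset.sum_congr rfl fun k _ => ?_
            rw [one_div, inv_pow, div_eq_mul_inv]
        _ ≤ Cd * CP * r * t * 2 := by gcongr
        _ = _ := by ring
    exact hle.trans ((Finset.sum_le_sum fun k _ => hstep k).trans hge)
  have ha0 : a 0 = ⨍ y in ball z r, f y ∂μ := by simp [a]
  rw [← ha0]
  exact le_of_tendsto ((hlim.sub_const _).abs) (Eventually.of_forall hsum)

theorem poin_point [ProperSpace X] {μ : Measure X} [IsLocallyFiniteMeasure μ] {Cd CP lam : ℝ}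
    (hd : Doubling μ Cd) (hP : Poincare μ CP lam) {f : X → ℝ}
    (hf : Continuous f) {h : X → ℝ≥0∞} (hh : IsUpperGradient f h) {x y : X} {t R : ℝ}
    (ht : 0 ≤ t) (hxy : 2 * lam * dist x y ≤ R)
    (hx : ∀ s, 0 < s → s ≤ R →
      (∫⁻ w in ball x s, h w ∂μ) / μ (ball x s) ≤ ENNReal.ofReal t)
    (hy : ∀ s, 0 < s → s ≤ R →
      (∫⁻ w in ball y s, h w ∂μ) / μ (ball y s) ≤ ENNReal.ofReal t) :
    |f x - f y| ≤ (6 * Cd * CP + 2 * Cd ^ 2 * CP) * t * dist x y := by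
  rcases eq_or_ne x y with rfl | hne
  · simp
  have hd0 : 0 < dist x y := dist_pos.2 hne
  have hlam := hP.2.1
  have hCd := hd.1
  set d := dist x y with hdd
  have h1 := poin_tele hd hP hf hh (z := x) (r := 2 * d) (by positivity) ht
    (fun s hs hs2 => hx s hs (by linarith))
  have h2 := poin_tele hd hP hf hh (z := y) (r := d) (by positivity) ht
    (fun s hs hs2 => hy s hs (by nlinarith))
  have h3 := avg_poin (z := x) (z' := y) (r := 2 * d) (r' := d) (D := Cd ^ 2) hP hf hh
    (by positivity) ht (ball_subset_ball' (by rw [dist_comm]; linarith)) (hd.ball_pos y hd0) (by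
      have := hd.ball_pow y hd0 2
      rw [ENNReal.ofReal_pow (by linarith)]
      exact (measure_mono (ball_subset_ball' (by linarith))).trans this) (by positivity)
      (hx _ (by positivity) (by linarith))
  rw [abs_le] at *
  constructor <;> linarith


/-- Points with controlled averages at small scales. -/
def GoodSet (μ : Measure X) (h : X → ℝ≥0∞) (k : ℕ) : Set X :=
  {z | ∀ s : ℝ, 0 < s → s ≤ 1 / ((k : ℝ) + 1) →
    (∫⁻ y in ball z s, h y ∂μ) / μ (ball z s) ≤ ENNReal.ofReal k}

theorem GoodSet.mono {μ : Measure X} {h : X → ℝ≥0∞} {k l : ℕ} (hkl : k ≤ l) :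
    GoodSet μ h k ⊆ GoodSet μ h l := by
  intro z hz s hs hs2
  refine (hz s hs (hs2.trans ?_)).trans (ENNReal.ofReal_le_ofReal (by exact_mod_cast hkl))
  have : (k:ℝ) ≤ l := by exact_mod_cast hkl
  gcongr

theorem ae_goodSet [ProperSpace X] {μ : Measure X} [IsLocallyFiniteMeasure μ] {Cd : ℝ}
    (hd : Doubling μ Cd) {h : X → ℝ≥0∞} (hm : Measurable h)
    (hloc : ∀ x r, ∫⁻ y in ball x r, h y ∂μ < ∞) :
    ∀ᵐ z ∂μ, ∃ k, z ∈ GoodSet μ h k := by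
  have : IsUnifLocDoublingMeasure μ := hd.unifLoc
  have hLI : LocallyIntegrable (fun x => (h x).toReal) μ := by
    intro x
    refine ⟨ball x 1, ball_mem_nhds x one_pos, ?_⟩
    exact integrable_toReal_of_lintegral_ne_top hm.aemeasurable (hloc x 1).ne
  filter_upwards [IsUnifLocDoublingMeasure.ae_tendsto_average μ hLI 1] with z hz
  have h1 := hz (l := 𝓝[>] (0:ℝ)) (fun _ => z) (fun r => r) tendsto_id (by
    filter_upwards [self_mem_nhdsWithin] with r hr
    exact mem_closedBall_self (by rw [one_mul]; exact le_of_lt hr))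
  have h2 := h1.eventually_lt_const (lt_add_one ((h z).toReal))
  set M := (h z).toReal + 1 with hM
  have hM0 : 0 ≤ M := by positivity
  have hCd := hd.1
  rw [eventually_nhdsWithin_iff, Metric.eventually_nhds_iff] at h2
  obtain ⟨ρ, hρ, h2⟩ := h2
  obtain ⟨k1, hk1⟩ := exists_nat_gt (1 / ρ)
  obtain ⟨k2, hk2⟩ := exists_nat_gt (M * Cd)
  refine ⟨max k1 k2, fun s hs hs2 => ?_⟩
  have hks : (k1:ℝ) ≤ (max k1 k2 : ℕ) := by exact_mod_cast le_max_left _ _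
  have hks2 : (k2:ℝ) ≤ (max k1 k2 : ℕ) := by exact_mod_cast le_max_right _ _
  have hsρ : s < ρ := by
    refine hs2.trans_lt ?_
    rw [div_lt_iff₀ (by positivity)]
    rw [div_lt_iff₀ hρ] at hk1
    nlinarith
  have h3 := h2 (y := s) (by rw [Real.dist_eq, sub_zero, abs_of_pos hs]; exact hsρ) hs
  rw [setAverage_eq, smul_eq_mul] at h3
  have hcf : μ (closedBall z s) ≠ ∞ := (isCompact_closedBall z s).measure_lt_top.ne
  have hcp : 0 < μ.real (closedBall z s) := ENNReal.toReal_pos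
    ((hd.ball_pos z hs).trans_le (measure_mono ball_subset_closedBall)).ne' hcf
  rw [inv_mul_eq_div, div_lt_iff₀ hcp] at h3
  have hfin2 : ∫⁻ y in closedBall z s, h y ∂μ < ∞ :=
    (lintegral_mono_set (closedBall_subset_ball (lt_add_one s))).trans_lt (hloc z (s + 1))
  have h4 : ∫⁻ y in closedBall z s, h y ∂μ ≤ ENNReal.ofReal M * μ (closedBall z s) := by
    rw [integral_toReal hm.aemeasurable (ae_lt_top hm hfin2.ne)] at h3
    rw [← ENNReal.ofReal_toReal hfin2.ne, ← ENNReal.ofReal_toReal hcf,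
      ← ENNReal.ofReal_mul hM0]
    exact ENNReal.ofReal_le_ofReal h3.le
  refine ENNReal.div_le_of_le_mul ?_
  calc ∫⁻ y in ball z s, h y ∂μ ≤ ∫⁻ y in closedBall z s, h y ∂μ :=
        lintegral_mono_set ball_subset_closedBall
    _ ≤ _ := h4
    _ ≤ ENNReal.ofReal M * (ENNReal.ofReal Cd * μ (ball z s)) := by
      gcongr
      exact (measure_mono (closedBall_subset_ball (by linarith))).trans (hd.2 z s hs).2.1
    _ = ENNReal.ofReal (M * Cd) * μ (ball z s) := by
      rw [ENNReal.ofReal_mul hM0, mul_assoc]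
    _ ≤ _ := by
      gcongr
      linarith

theorem ug_aemeasurable [ProperSpace X] {μ : Measure X} [IsLocallyFiniteMeasure μ] {Cd CP lam : ℝ}
    (hd : Doubling μ Cd) (hP : Poincare μ CP lam) {w : X → ℝ} (hw0 : ∀ x, 0 ≤ w x)
    (hw1 : ∀ x, w x ≤ 1) {g : X → ℝ≥0∞} (hg : IsUpperGradient w g) (hfin : ∫⁻ x, g x ∂μ < ∞) :
    AEMeasurable w μ := by
  obtain ⟨g1, hgg1, hg1, hg1i⟩ := exists_le_lowerSemicontinuous_lintegral_ge μ g hg.1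
    (ε := 1) one_ne_zero
  set h : X → ℝ≥0∞ := fun x => g1 x + 1 with hh
  have hlsc : LowerSemicontinuous h := hg1.add lowerSemicontinuous_const
  have hhm : Measurable h := hlsc.measurable
  have hloc : ∀ x r, ∫⁻ y in ball x r, h y ∂μ < ∞ := by
    intro x r
    rw [hh, lintegral_add_right _ measurable_const]
    refine ENNReal.add_lt_top.2 ⟨?_, ?_⟩
    · refine (setLIntegral_le_lintegral _ _).trans_lt (hg1i.trans_lt ?_)
      exact ENNReal.add_lt_top.2 ⟨hfin, ENNReal.one_lt_top⟩
    · rw [setLIntegral_const, one_mul]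
      exact hd.ball_lt_top x r
  obtain ⟨hn, hnL, hn0, hnm, hns⟩ := lsc_approx hlsc
  have hnle : ∀ n x, ENNReal.ofReal (hn n x) ≤ h x := fun n x => by
    rw [← hns x]; exact le_iSup (fun n => ENNReal.ofReal (hn n x)) n
  have habs : ∀ x y, |w y - w x| ≤ 1 := fun x y => by
    rw [abs_le]; constructor <;> linarith [hw0 x, hw0 y, hw1 x, hw1 y]
  have hCd := hd.1
  have hCP := hP.1
  have hlam := hP.2.1
  -- local estimate
  have key : ∀ (k : ℕ), ∀ x ∈ GoodSet μ h k, ∀ y ∈ GoodSet μ h k,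
      2 * lam * dist x y ≤ 1 / ((k:ℝ) + 1) →
      |w y - w x| ≤ (6 * Cd * CP + 2 * Cd ^ 2 * CP) * k * dist x y := by
    intro k x hx y hy hxy
    refine le_of_forall_lt fun a ha => ?_
    let Wn : ℕ → X → ℝ := fun n z => n * dist x z
    have hW0 : ∀ n z, 0 ≤ Wn n z := fun n z => by positivity
    obtain ⟨n, hn1⟩ := chain_limit (Wn := Wn) hnL hn0 hnm
      (fun n => LipschitzWith.of_dist_le_mul fun z z' => by
        simp only [Wn, Real.dist_eq, ← mul_sub, abs_mul, Nat.abs_cast]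
        refine mul_le_mul_of_nonneg_left ?_ (by positivity)
        have := abs_dist_sub_le z z' x
        rwa [dist_comm z x, dist_comm z' x] at this)
      hW0
      (fun m n hmn z => by
        simp only [Wn]
        gcongr)
      (w := fun z => |w z - w x|)
      (fun z => by
        rcases eq_or_ne x z with rfl | hne
        · simp
        · obtain ⟨n, hn⟩ := exists_nat_gt (1 / dist x z)
          rw [div_lt_iff₀ (dist_pos.2 hne)] at hn
          refine le_trans ?_ (le_iSup _ n)
          exact ENNReal.ofReal_le_ofReal ((habs x z).trans hn.le))
      (fun z => by
        rw [hns]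
        calc ENNReal.ofReal |w z - w x| ≤ ENNReal.ofReal 1 := ENNReal.ofReal_le_ofReal (habs x z)
          _ ≤ h z := by rw [ENNReal.ofReal_one]; exact le_add_self)
      (fun γ => by
        simp only [hns]
        unfold UGIneq
        refine (ENNReal.ofReal_le_ofReal (abs_abs_sub_abs_le_abs_sub _ _)).trans ?_
        rw [sub_sub_sub_cancel_right]
        refine (hg.2 γ).trans (lintegral_mono fun t => ?_)
        exact (hgg1 _).trans le_self_add) y ha
    set F := chainF (1 / ((n : ℝ) + 1)) (hn n) (Wn n) with hF
    have hε : 0 < 1 / ((n : ℝ) + 1) := by positivity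
    have hosc := chainF_osc (hn0 n) (hW0 n) (ε := 1 / ((n : ℝ) + 1))
    have hFc : Continuous F := (osc_loclip hε (hnL n).continuous (hn0 n) hosc).continuous
    have hFug : IsUpperGradient F h := by
      refine ⟨hhm, fun γ => ?_⟩
      exact ((osc_ug hε (hnL n).continuous (hn0 n) hosc).2 γ).trans
        (lintegral_mono fun t => hnle _ _)
    have hFx : F x = 0 := by
      refine le_antisymm ((chainF_le (hn0 n) (hW0 n) _ x).trans ?_) (chainF_nonneg (hn0 n) (hW0 n) _ x)
      simp [Wn]
    have := poin_point hd hP hFc hFug (x := x) (y := y) (t := k) (by positivity) hxy hx hy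
    rw [hFx, zero_sub, abs_neg] at this
    exact hn1.trans_le ((le_abs_self _).trans this)
  have hLip : ∀ k : ℕ, ∃ K : ℝ≥0, LipschitzOnWith K w (GoodSet μ h k) := by
    intro k
    set A := (6 * Cd * CP + 2 * Cd ^ 2 * CP) * k with hA
    set B := 2 * lam * ((k:ℝ) + 1) with hB
    have hA0 : 0 ≤ A := by positivity
    have hB0 : 0 ≤ B := by positivity
    refine ⟨⟨A + B, by positivity⟩, LipschitzOnWith.of_dist_le_mul fun y hy x hx => ?_⟩
    change dist (w y) (w x) ≤ (A + B) * dist y x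
    rw [Real.dist_eq, dist_comm y x, add_mul]
    have hdn : 0 ≤ dist x y := dist_nonneg
    rcases le_or_gt (2 * lam * dist x y) (1 / ((k:ℝ) + 1)) with hc | hc
    · have := key k x hx y hy hc
      have h2 : 0 ≤ B * dist x y := by positivity
      linarith
    · rw [div_lt_iff₀ (by positivity)] at hc
      have h2 : 0 ≤ A * dist x y := by positivity
      have := habs x y
      have h3 : B * dist x y = 2 * lam * dist x y * ((k:ℝ) + 1) := by rw [hB]; ring
      linarith
  choose K hK using hLip
  choose v hv hvw using fun k => (hK k).extend_real
  refine aemeasurable_of_tendsto_metrizable_ae (f := v) atTop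
    (fun k => (hv k).continuous.measurable.aemeasurable) ?_
  filter_upwards [ae_goodSet hd hhm hloc] with z hz
  obtain ⟨k, hk⟩ := hz
  refine tendsto_const_nhds.congr' ?_
  filter_upwards [eventually_ge_atTop k] with l hl
  exact hvw l (GoodSet.mono hl hk)


theorem borel_major {μ : Measure X} {f : X → ℝ≥0∞} (hf : AEMeasurable f μ) :
    ∃ F : X → ℝ≥0∞, Measurable F ∧ (∀ x, f x ≤ F x) ∧ ∫⁻ x, F x ∂μ = ∫⁻ x, f x ∂μ := by
  set N := toMeasurable μ {x | f x ≠ hf.mk f x} with hN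
  have hNm : MeasurableSet N := measurableSet_toMeasurable _ _
  have hN0 : μ N = 0 := by
    rw [hN, measure_toMeasurable]
    exact hf.ae_eq_mk
  refine ⟨fun x => hf.mk f x + N.indicator (fun _ => ⊤) x, ?_, fun x => ?_, ?_⟩
  · exact hf.measurable_mk.add (measurable_const.indicator hNm)
  · by_cases hx : x ∈ N
    · simp [hx]
    · have : f x = hf.mk f x := by
        by_contra hne
        exact hx (subset_toMeasurable _ _ hne)
      exact this.le.trans le_self_add
  · rw [lintegral_add_right _ (measurable_const.indicator hNm), lintegral_indicator hNm,
      setLIntegral_const, hN0, mul_zero, add_zero]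
    exact (lintegral_congr_ae hf.ae_eq_mk).symm

theorem cap_lemma [ProperSpace X] {μ : Measure X} [IsLocallyFiniteMeasure μ] {Cd CP lam : ℝ}
    (hd : Doubling μ Cd) (hP : Poincare μ CP lam) {A : Set X} {δ : ℝ≥0∞} (hA : capa1 μ A < δ) :
    ∃ (h : X → ℝ≥0∞) (φ : ℕ → X → ℝ), Measurable h ∧ ∫⁻ x, h x ∂μ < δ ∧
      (∀ n, LocLipOn (φ n) univ) ∧ (∀ n x, 0 ≤ φ n x) ∧
      (∀ m n, m ≤ n → ∀ x, φ m x ≤ φ n x) ∧ (∀ n x, ENNReal.ofReal (φ n x) ≤ h x) ∧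
      (∀ n (γ : Curve X), ∀ᵐ t ∂(volume.restrict (Icc 0 γ.len)),
        ENNReal.ofReal |deriv (φ n ∘ γ.toFun) t| ≤ h (γ.toFun t)) ∧
      ∀ x ∈ A, ∃ n, 1 / 2 < φ n x := by
  unfold capa1 at hA
  simp only [iInf_lt_iff] at hA
  obtain ⟨u, -, huA, hu⟩ := hA
  unfold NNorm at hu
  rw [Measure.restrict_univ, ← lt_tsub_iff_left] at hu
  simp only [iInf_lt_iff] at hu
  obtain ⟨g, ⟨hgm, ρ, hρm, hρf, hρ⟩, hu⟩ := hu
  rw [lt_tsub_iff_left] at hu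
  obtain ⟨δ', hδ1, hδ2⟩ := exists_between hu
  set I0 := ∫⁻ x, ENNReal.ofReal |u x| ∂μ with hI0
  set I1 := ∫⁻ x, g x ∂μ with hI1
  have hI : I0 + I1 ≠ ∞ := (hu.trans_le le_top).ne
  obtain ⟨hI0f, hI1f⟩ := ENNReal.add_ne_top.1 hI
  set s : ℝ≥0∞ := (δ' - (I0 + I1)) / 3 with hs
  have hs0 : s ≠ 0 := by
    rw [hs]
    refine (ENNReal.div_pos (tsub_pos_of_lt hδ1).ne' (by norm_num)).ne'
  have hs3 : I0 + I1 + 3 * s = δ' := by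
    rw [hs, ENNReal.mul_div_cancel (by norm_num) (by norm_num), add_tsub_cancel_of_le hδ1.le]
  have hsf : s ≠ ∞ := by
    rw [hs]
    exact (ENNReal.div_lt_top (ENNReal.sub_ne_top (hδ2.trans_le le_top).ne) (by norm_num)).ne
  obtain ⟨c, hc0, hc⟩ := ENNReal.exists_nnreal_pos_mul_lt hρf.ne hs0
  obtain ⟨gb, hgbm, hgb, hgbi⟩ := borel_major hgm
  set g1 : X → ℝ≥0∞ := fun x => gb x + c * ρ x with hg1
  have hg1m : Measurable g1 := hgbm.add (hρm.const_mul _)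
  have hg1i : ∫⁻ x, g1 x ∂μ ≤ I1 + s := by
    rw [hg1, lintegral_add_left hgbm, lintegral_const_mul _ hρm, hgbi]
    gcongr
  set w : X → ℝ := fun x => min |u x| 1 with hw
  have hw0 : ∀ x, 0 ≤ w x := fun x => le_min (abs_nonneg _) zero_le_one
  have hw1 : ∀ x, w x ≤ 1 := fun x => min_le_right _ _
  have hug : IsUpperGradient w g1 := by
    refine ⟨hg1m, fun γ => ?_⟩
    by_cases hγ : UGIneq u g γ
    · have h1 : |w (γ.toFun 0) - w (γ.toFun γ.len)| ≤ |u (γ.toFun 0) - u (γ.toFun γ.len)| := by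
        refine le_trans ?_ (abs_abs_sub_abs_le_abs_sub _ _)
        have := abs_min_sub_min_le_max |u (γ.toFun 0)| 1 |u (γ.toFun γ.len)| 1
        simpa [hw] using this
      refine (ENNReal.ofReal_le_ofReal h1).trans (hγ.trans (lintegral_mono fun t => ?_))
      exact (hgb _).trans le_self_add
    · have h1 := hρ γ ⟨fun _ _ => mem_univ _, hγ⟩
      have h2 : γ.integral g1 = ∞ := by
        rw [eq_top_iff]
        have h3 : (c:ℝ≥0∞) * γ.integral ρ ≤ γ.integral g1 := by
          unfold Curve.integral
          rw [← lintegral_const_mul' _ _ ENNReal.coe_ne_top]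
          exact lintegral_mono fun t => le_add_self
        rw [h1, ENNReal.mul_top (by exact_mod_cast hc0.ne')] at h3
        exact h3
      unfold UGIneq
      rw [h2]
      exact le_top
  have hg1fin : ∫⁻ x, g1 x ∂μ < ∞ :=
    hg1i.trans_lt (ENNReal.add_lt_top.2 ⟨hI1f.lt_top, hsf.lt_top⟩)
  have hwm : AEMeasurable w μ := ug_aemeasurable hd hP hw0 hw1 hug hg1fin
  obtain ⟨W0, hW0m, hwW0, hW0i⟩ := borel_major (hwm.ennreal_ofReal)
  obtain ⟨W, hW0W, hWl, hWi⟩ := exists_le_lowerSemicontinuous_lintegral_ge μ W0 hW0m hs0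
  obtain ⟨g2, hg12, hg2l, hg2i⟩ := exists_le_lowerSemicontinuous_lintegral_ge μ g1 hg1m hs0
  set h : X → ℝ≥0∞ := fun x => g2 x + W x with hh
  have hl : LowerSemicontinuous h := hg2l.add hWl
  obtain ⟨hn, hnL, hn0, hnm, hns⟩ := lsc_approx hl
  obtain ⟨Wn, WnL, Wn0, Wnm, Wns⟩ := lsc_approx hWl
  have hnle : ∀ n x, ENNReal.ofReal (hn n x) ≤ h x := fun n x => by
    rw [← hns x]; exact le_iSup (fun n => ENNReal.ofReal (hn n x)) n
  have Wnle : ∀ n x, ENNReal.ofReal (Wn n x) ≤ W x := fun n x => by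
    rw [← Wns x]; exact le_iSup (fun n => ENNReal.ofReal (Wn n x)) n
  have hε : ∀ n : ℕ, 0 < 1 / ((n : ℝ) + 1) := fun n => by positivity
  have hosc := fun n : ℕ => chainF_osc (hn0 n) (Wn0 n) (ε := 1 / ((n : ℝ) + 1))
  refine ⟨h, fun n => chainF (1 / ((n : ℝ) + 1)) (hn n) (Wn n), hl.measurable, ?_,
    fun n => osc_loclip (hε n) (hnL n).continuous (hn0 n) (hosc n),
    fun n x => chainF_nonneg (hn0 n) (Wn0 n) _ x, fun m n hmn x => ?_, fun n x => ?_,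
    fun n γ => ?_, fun x hx => ?_⟩
  · have : ∫⁻ x, h x ∂μ ≤ (I1 + s + s) + (I0 + s) := by
      rw [hh, lintegral_add_left hg2l.measurable]
      refine add_le_add (hg2i.trans (by gcongr)) (hWi.trans ?_)
      gcongr
      rw [hW0i]
      exact lintegral_mono fun x => ENNReal.ofReal_le_ofReal (min_le_left _ _)
    refine this.trans_lt (lt_of_eq_of_lt ?_ hδ2)
    rw [← hs3]
    ring
  · refine chainF_mono (hn0 m) (Wn0 m) (hnm m n hmn) (Wnm m n hmn) ?_ x
    have : (m:ℝ) ≤ n := by exact_mod_cast hmn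
    gcongr
  · exact (ENNReal.ofReal_le_ofReal (chainF_le (hn0 n) (Wn0 n) _ x)).trans
      ((Wnle n x).trans le_add_self)
  · filter_upwards [osc_deriv (hε n) (hnL n).continuous (hn0 n) (hosc n) γ] with t ht
    exact ht.trans (hnle _ _)
  · refine chain_limit hnL hn0 hnm WnL Wn0 Wnm (w := w) (fun z => ?_) (fun z => ?_)
      (fun γ => ?_) x ?_
    · rw [Wns]
      exact (hwW0 z).trans (hW0W z)
    · rw [hns]
      exact (hwW0 z).trans ((hW0W z).trans le_add_self)
    · simp only [hns]
      exact (hug.2 γ).trans (lintegral_mono fun t => (hg12 _).trans le_self_add)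
    · have : 1 ≤ |u x| := (huA x hx).trans (le_abs_self _)
      simp only [hw]
      rw [min_eq_right this]
      norm_num


theorem L1LocConv.mono {μ : Measure X} {A B : Set X} {v : ℕ → X → ℝ} {u : X → ℝ}
    (h : L1LocConv μ A v u) (hBA : B ⊆ A) : L1LocConv μ B v u := by
  intro x hx
  obtain ⟨r, hr, h1⟩ := h x (hBA hx)
  refine ⟨r, hr, tendsto_of_tendsto_of_tendsto_of_le_of_le tendsto_const_nhds h1
    (fun _ => zero_le) fun i => ?_⟩
  exact lintegral_mono_set (inter_subset_inter_left _ hBA)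

theorem L1LocConv.comp {μ : Measure X} {A : Set X} {v : ℕ → X → ℝ} {u : X → ℝ}
    (h : L1LocConv μ A v u) {σ : ℕ → ℕ} (hσ : Tendsto σ atTop atTop) :
    L1LocConv μ A (fun j => v (σ j)) u := by
  intro x hx
  obtain ⟨r, hr, h1⟩ := h x hx
  exact ⟨r, hr, h1.comp hσ⟩

theorem L1LocConv.compact {μ : Measure X} {A K : Set X} {v : ℕ → X → ℝ} {u : X → ℝ}
    (h : L1LocConv μ A v u) (hK : IsCompact K) (hKA : K ⊆ A) :
    Tendsto (fun i => ∫⁻ y in K, ENNReal.ofReal |v i y - u y| ∂μ) atTop (𝓝 0) := by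
  refine hK.induction_on (p := fun s =>
    Tendsto (fun i => ∫⁻ y in s, ENNReal.ofReal |v i y - u y| ∂μ) atTop (𝓝 0)) ?_ ?_ ?_ ?_
  · simp
  · intro s t hst ht
    exact tendsto_of_tendsto_of_tendsto_of_le_of_le tendsto_const_nhds ht
      (fun _ => zero_le) fun i => lintegral_mono_set hst
  · intro s t hs ht
    refine tendsto_of_tendsto_of_tendsto_of_le_of_le tendsto_const_nhds (by simpa using hs.add ht)
      (fun _ => zero_le) fun i => lintegral_union_le _ _ _
  · intro x hx
    obtain ⟨r, hr, h1⟩ := h x (hKA hx)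
    refine ⟨A ∩ ball x r, ?_, h1⟩
    exact inter_mem (mem_of_superset self_mem_nhdsWithin hKA)
      (mem_nhdsWithin_of_mem_nhds (ball_mem_nhds x hr))

theorem exhaust [ProperSpace X] {Ω : Set X} (hΩ : IsOpen Ω) :
    ∃ K : ℕ → Set X, (∀ k, IsCompact (K k)) ∧ (∀ k, K k ⊆ Ω) ∧
      ∀ x ∈ Ω, ∃ r > (0:ℝ), ∀ᶠ k in atTop, ball x r ⊆ K k := by
  rcases isEmpty_or_nonempty X with hX | ⟨⟨x0⟩⟩
  · exact ⟨fun _ => ∅, fun _ => isCompact_empty, fun _ => empty_subset _,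
      fun x => (hX.false x).elim⟩
  refine ⟨fun k => closedBall x0 k ∩ {y | ENNReal.ofReal (1 / ((k:ℝ) + 1)) ≤ infEDist y Ωᶜ},
    fun k => ?_, fun k y hy => ?_, fun x hx => ?_⟩
  · exact (isCompact_closedBall x0 _).inter_right
      (isClosed_le continuous_const continuous_infEDist)
  · by_contra hyΩ
    have h1 := hy.2
    rw [mem_setOf_eq, infEDist_zero_of_mem (show y ∈ Ωᶜ from hyΩ), nonpos_iff_eq_zero,
      ENNReal.ofReal_eq_zero] at h1
    have : 0 < 1 / ((k:ℝ) + 1) := by positivity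
    linarith
  · obtain ⟨r, hr, hrΩ⟩ := Metric.isOpen_iff.1 hΩ x hx
    refine ⟨r / 2, by positivity, ?_⟩
    obtain ⟨k1, hk1⟩ := exists_nat_gt (1 / (r / 2))
    obtain ⟨k2, hk2⟩ := exists_nat_gt (dist x x0 + r / 2)
    filter_upwards [eventually_ge_atTop k1, eventually_ge_atTop k2] with k h1 h2 y hy
    have h1' : (k1:ℝ) ≤ k := by exact_mod_cast h1
    have h2' : (k2:ℝ) ≤ k := by exact_mod_cast h2
    rw [mem_ball] at hy
    refine ⟨?_, ?_⟩
    · rw [mem_closedBall]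
      have := dist_triangle y x x0
      linarith
    · rw [mem_setOf_eq, le_infEDist]
      intro z hz
      have hzr : r ≤ dist z x := by
        by_contra hlt
        exact hz (hrΩ (mem_ball.2 (not_le.1 hlt)))
      rw [edist_dist]
      apply ENNReal.ofReal_le_ofReal
      have h3 : 1 / ((k:ℝ) + 1) ≤ r / 2 := by
        rw [div_le_iff₀ (by positivity)]
        rw [div_lt_iff₀ (by positivity)] at hk1
        nlinarith
      have := dist_triangle z y x
      rw [dist_comm z y] at this
      linarith

theorem min_dug [SecondCountableTopology X] {μ : Measure X} {v : X → ℝ} {g : X → ℝ≥0∞} {Ω : Set X}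
    (hΩ : IsOpen Ω) (hg : IsMinimalWUG μ v g Ω) (hfin : ∫⁻ x in Ω, g x ∂μ < ∞) : DUG μ v g Ω :=
  wug_dug hΩ hg.1 fun _ _ => ⟨1, one_pos, (lintegral_mono_set inter_subset_left).trans_lt hfin⟩

/-- Choice of a good approximant. -/
theorem good_approx [ProperSpace X] {μ : Measure X} [IsLocallyFiniteMeasure μ]
    {Ω G K : Set X} (hΩ : IsOpen Ω) (hG : IsOpen G) (hGΩ : G ⊆ Ω) (hK : IsCompact K) (hKΩ : K ⊆ Ω)
    {u : X → ℝ} {T ε η : ℝ≥0∞} (hT : tvOpen μ Ω u < T) (hε : ε < tvOpen μ G u) (hη : 0 < η) :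
    ∃ (v : X → ℝ) (g : X → ℝ≥0∞), LocLipOn v Ω ∧ IsMinimalWUG μ v g Ω ∧
      ∫⁻ x in Ω, g x ∂μ < T ∧ ε < ∫⁻ x in G, g x ∂μ ∧
      ∫⁻ x in K, ENNReal.ofReal |v x - u x| ∂μ < η := by
  unfold tvOpen at hT
  simp only [iInf_lt_iff] at hT
  obtain ⟨v, g, hv, hg, hvu, hlim⟩ := hT
  obtain ⟨σ, hσ, hσT⟩ := extraction_of_frequently_atTop (frequently_lt_of_liminf_lt
    (by isBoundedDefault) hlim)
  have hvG : ∀ j, LocLipOn (v (σ j)) G := by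
    intro j x hx
    obtain ⟨r, hr, K, hK⟩ := hv (σ j) x (hGΩ hx)
    exact ⟨r, hr, K, hK.mono (inter_subset_inter_left _ hGΩ)⟩
  choose g' hg' hmin using fun j => exists_min (μ := μ) hG (hvG j)
  have h1 : tvOpen μ G u ≤ liminf (fun j => ∫⁻ x in G, g' j x ∂μ) atTop := by
    unfold tvOpen
    exact iInf_le_of_le (fun j => v (σ j)) (iInf_le_of_le g' (iInf_le_of_le hvG
      (iInf_le_of_le hg' (iInf_le_of_le ((hvu.comp hσ.tendsto_atTop).mono hGΩ) le_rfl))))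
  have h2 := eventually_lt_of_lt_liminf (hε.trans_le h1) (by isBoundedDefault)
  have h3 := ((hvu.comp hσ.tendsto_atTop).compact hK hKΩ).eventually_lt_const hη
  obtain ⟨j, hj2, hj3⟩ := (h2.and h3).exists
  refine ⟨v (σ j), g (σ j), hv _, hg _, hσT j, hj2.trans_le ?_, hj3⟩
  have hd := (min_dug hΩ (hg (σ j)) ((hσT j).trans_le le_top)).mono_set hGΩ
  exact lintegral_mono_ae (ae_restrict_of_ae (hmin j _ (hg (σ j)).1.1 hd))


/-! ### The cut-off construction -/

/-- Truncation of `v` at height `M (1 - 2 φ)_+`. -/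
def cut (M : ℝ) (φ v : X → ℝ) (x : X) : ℝ :=
  max (-(M * max (1 - 2 * φ x) 0)) (min (v x) (M * max (1 - 2 * φ x) 0))

theorem clamp_sub (a b p q : ℝ) :
    |max (-p) (min a p) - max (-q) (min b q)| ≤ max |a - b| |p - q| := by
  refine (abs_max_sub_max_le_max _ _ _ _).trans (max_le ?_ ?_)
  · rw [show -p - -q = -(p - q) by ring, abs_neg]; exact le_max_right _ _
  · exact abs_min_sub_min_le_max _ _ _ _

theorem cut_sub {M : ℝ} (hM : 0 ≤ M) (φ v : X → ℝ) (x y : X) :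
    |cut M φ v x - cut M φ v y| ≤ |v x - v y| + 2 * M * |φ x - φ y| := by
  unfold cut
  refine (clamp_sub _ _ _ _).trans (max_le ?_ ?_)
  · have : 0 ≤ 2 * M * |φ x - φ y| := by positivity
    linarith
  · have h := abs_max_sub_max_le_abs (1 - 2 * φ x) (1 - 2 * φ y) 0
    have h2 : |1 - 2 * φ x - (1 - 2 * φ y)| = 2 * |φ x - φ y| := by
      rw [show 1 - 2 * φ x - (1 - 2 * φ y) = -(2 * (φ x - φ y)) by ring, abs_neg, abs_mul]
      norm_num
    rw [← mul_sub, abs_mul, abs_of_nonneg hM]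
    have := mul_le_mul_of_nonneg_left (h.trans h2.le) hM
    have := abs_nonneg (v x - v y)
    linarith

theorem cut_zero {M : ℝ} {φ v : X → ℝ} {x : X} (h : 1 / 2 < φ x) : cut M φ v x = 0 := by
  unfold cut
  rw [max_eq_right (by linarith : 1 - 2 * φ x ≤ 0)]
  simp

theorem cut_locLip {M : ℝ} (hM : 0 ≤ M) {φ v : X → ℝ} {Ω : Set X} (hv : LocLipOn v Ω)
    (hφ : LocLipOn φ univ) : LocLipOn (cut M φ v) Ω := by
  intro x hx
  obtain ⟨r, hr, K, hK⟩ := hv x hx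
  obtain ⟨r', hr', K', hK'⟩ := hφ x (mem_univ x)
  refine ⟨min r r', lt_min hr hr', K + 2 * M.toNNReal * K', ?_⟩
  refine LipschitzOnWith.of_dist_le_mul fun y hy z hz => ?_
  have h1 := hK.dist_le_mul y ⟨hy.1, ball_subset_ball (min_le_left _ _) hy.2⟩ z
    ⟨hz.1, ball_subset_ball (min_le_left _ _) hz.2⟩
  have h2 := hK'.dist_le_mul y ⟨mem_univ _, ball_subset_ball (min_le_right _ _) hy.2⟩ z
    ⟨mem_univ _, ball_subset_ball (min_le_right _ _) hz.2⟩
  have h3 := cut_sub hM φ v y z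
  rw [Real.dist_eq] at *
  push_cast
  rw [Real.coe_toNNReal _ hM]
  have h4 := mul_le_mul_of_nonneg_left h2 (by positivity : 0 ≤ 2 * M)
  calc _ ≤ _ := h3
    _ ≤ K * dist y z + 2 * M * (K' * dist y z) := add_le_add h1 h4
    _ = _ := by ring

theorem deriv_le_of_sub {f v φ : ℝ → ℝ} {t M : ℝ} (hv : DifferentiableAt ℝ v t)
    (hφ : DifferentiableAt ℝ φ t) (hM : 0 ≤ M)
    (h : ∀ s, |f s - f t| ≤ |v s - v t| + M * |φ s - φ t|) :
    |deriv f t| ≤ |deriv v t| + M * |deriv φ t| := by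
  by_cases hf : DifferentiableAt ℝ f t
  swap
  · rw [deriv_zero_of_not_differentiableAt hf, abs_zero]; positivity
  have h1 := (hasDerivAt_iff_tendsto_slope.1 hf.hasDerivAt).abs
  have h2 := (hasDerivAt_iff_tendsto_slope.1 hv.hasDerivAt).abs
  have h3 := (hasDerivAt_iff_tendsto_slope.1 hφ.hasDerivAt).abs
  refine le_of_tendsto_of_tendsto' h1 (h2.add (h3.const_mul M)) fun s => ?_
  simp only [slope_def_field, abs_div]
  rw [mul_div_assoc', ← add_div]
  exact div_le_div_of_nonneg_right (h s) (abs_nonneg _)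

theorem cut_dug {μ : Measure X} {M : ℝ} (hM : 0 ≤ M) {φ v : X → ℝ} {g h : X → ℝ≥0∞} {Ω : Set X}
    (hv : LocLipOn v Ω) (hφ : LocLipOn φ univ) (hg : DUG μ v g Ω)
    (hh : ∀ γ : Curve X, ∀ᵐ t ∂(volume.restrict (Icc 0 γ.len)),
      ENNReal.ofReal |deriv (φ ∘ γ.toFun) t| ≤ h (γ.toFun t)) :
    DUG μ (cut M φ v)
      ({x | 1 / 2 < φ x}ᶜ.indicator (fun x => g x + ENNReal.ofReal (2 * M) * h x)) Ω := by
  obtain ⟨ρ, hρ, hρf, H⟩ := hg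
  refine ⟨ρ, hρ, hρf, fun γ hγ hγρ => ?_⟩
  obtain ⟨K1, hK1⟩ := γ.lip_comp hγ hv
  obtain ⟨K2, hK2⟩ := γ.lip_comp (fun _ _ => mem_univ _) hφ
  apply ae_Ioo_of_Icc
  have d1 := hK1.ae_differentiableWithinAt_of_mem (μ := volume)
  have d2 := hK2.ae_differentiableWithinAt_of_mem (μ := volume)
  filter_upwards [d1, d2, (ae_restrict_iff' measurableSet_Icc).1 (H γ hγ hγρ),
    (ae_restrict_iff' measurableSet_Icc).1 (hh γ)] with t e1 e2 e3 e4 ht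
  have ht' := Ioo_subset_Icc_self ht
  have hn : Icc 0 γ.len ∈ 𝓝 t := Icc_mem_nhds ht.1 ht.2
  have e1 := (e1 ht').differentiableAt hn
  have e2 := (e2 ht').differentiableAt hn
  by_cases hZ : 1 / 2 < φ (γ.toFun t)
  · have hev : (cut M φ v ∘ γ.toFun) =ᶠ[𝓝 t] fun _ => 0 := by
      have := e2.continuousAt.eventually (lt_mem_nhds (a := 1/2) hZ)
      filter_upwards [this] with s hs
      exact cut_zero hs
    rw [hev.deriv_eq]
    simp
  · rw [indicator_of_mem (by exact hZ)]
    have := deriv_le_of_sub (f := cut M φ v ∘ γ.toFun) (M := 2 * M) e1 e2 (by positivity)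
      (fun s => cut_sub hM φ v _ _)
    refine (ENNReal.ofReal_le_ofReal this).trans ?_
    rw [ENNReal.ofReal_add (abs_nonneg _) (by positivity), ENNReal.ofReal_mul (by positivity)]
    exact add_le_add (e3 ht') (mul_le_mul_right (e4 ht') _)

theorem cut_main [ProperSpace X] {μ : Measure X} [IsLocallyFiniteMeasure μ] {M : ℝ} (hM : 0 ≤ M)
    {φ v : X → ℝ} {g h : X → ℝ≥0∞} {Ω : Set X} (hΩ : IsOpen Ω)
    (hv : LocLipOn v Ω) (hφ : LocLipOn φ univ) (hg : IsMinimalWUG μ v g Ω)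
    (hfin : ∫⁻ x in Ω, g x ∂μ < ∞) (hhm : Measurable h)
    (hh : ∀ γ : Curve X, ∀ᵐ t ∂(volume.restrict (Icc 0 γ.len)),
      ENNReal.ofReal |deriv (φ ∘ γ.toFun) t| ≤ h (γ.toFun t)) :
    LocLipOn (cut M φ v) Ω ∧ ∃ G, IsMinimalWUG μ (cut M φ v) G Ω ∧
      ∫⁻ x in Ω, G x ∂μ + ∫⁻ x in Ω ∩ {x | 1 / 2 < φ x}, g x ∂μ ≤
        ∫⁻ x in Ω, g x ∂μ + ENNReal.ofReal (2 * M) * ∫⁻ x, h x ∂μ := by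
  have hf := cut_locLip hM hv hφ
  refine ⟨hf, ?_⟩
  obtain ⟨G, hG, hmin⟩ := exists_min (μ := μ) hΩ hf
  refine ⟨G, hG, ?_⟩
  have hZ : MeasurableSet {x | 1 / 2 < φ x} :=
    (isOpen_lt continuous_const hφ.continuous).measurableSet
  have hgm : AEMeasurable g μ := hg.1.1
  have h1 := hmin _ ((hgm.add (hhm.aemeasurable.const_mul (ENNReal.ofReal (2 * M)))).indicator
    hZ.compl) (cut_dug hM hv hφ (min_dug hΩ hg hfin) hh)
  have h2 : ∫⁻ x in Ω, G x ∂μ ≤ ∫⁻ x in Ω \ {x | 1 / 2 < φ x}, g x ∂μ +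
      ENNReal.ofReal (2 * M) * ∫⁻ x, h x ∂μ := by
    refine (lintegral_mono_ae (ae_restrict_of_ae h1)).trans ?_
    rw [lintegral_indicator hZ.compl, Measure.restrict_restrict hZ.compl, inter_comm,
      ← sdiff_eq]
    simp only [Pi.add_apply]
    rw [lintegral_add_left' hgm.restrict, lintegral_const_mul _ hhm]
    gcongr
    exact Measure.restrict_le_self
  rw [← lintegral_inter_add_sdiff g Ω hZ]
  calc _ ≤ _ := add_le_add_left h2 _
    _ = _ := by ring


theorem one_step [ProperSpace X] {μ : Measure X} [IsLocallyFiniteMeasure μ] {Cd CP lam : ℝ}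
    (hd : Doubling μ Cd) (hP : Poincare μ CP lam) {Ω A K : Set X} (hΩ : IsOpen Ω) (hA : A ⊆ Ω)
    (hK : IsCompact K) (hKΩ : K ⊆ Ω) {w : X → ℝ} {δ ε' T η : ℝ≥0∞} {M : ℝ} (hM : 0 ≤ M)
    (hcap : capa1 μ A < δ) (hε : ε' < tv μ A w) (hT : tvOpen μ Ω w < T) (hTf : T ≠ ∞)
    (hη : 0 < η) :
    ∃ (v φ : X → ℝ) (G h : X → ℝ≥0∞), LocLipOn v Ω ∧ LocLipOn φ univ ∧ Measurable h ∧
      ∫⁻ x, h x ∂μ < δ ∧ (∀ x, 0 ≤ φ x) ∧ (∀ x, ENNReal.ofReal (φ x) ≤ h x) ∧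
      ∫⁻ x in K, ENNReal.ofReal |v x - w x| ∂μ < η ∧
      LocLipOn (cut M φ v) Ω ∧ IsMinimalWUG μ (cut M φ v) G Ω ∧
      ∫⁻ x in Ω, G x ∂μ + ε' ≤ T + ENNReal.ofReal (2 * M) * δ := by
  obtain ⟨h, φ, hhm, hhδ, hφ, hφ0, hφm, hφh, hder, hφA⟩ := cap_lemma hd hP hcap
  have hop : ∀ n, IsOpen (Ω ∩ {x | 1 / 2 < φ n x}) := fun n =>
    hΩ.inter (isOpen_lt continuous_const (hφ n).continuous)
  set U := ⋃ n, Ω ∩ {x | 1 / 2 < φ n x} with hU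
  have hUo : IsOpen U := isOpen_iUnion hop
  have hUΩ : U ⊆ Ω := iUnion_subset fun n => inter_subset_left
  have hAU : A ⊆ U := by
    intro x hx
    obtain ⟨n, hn⟩ := hφA x hx
    exact mem_iUnion.2 ⟨n, hA hx, hn⟩
  have h1 : tv μ A w ≤ tvOpen μ U w := by
    unfold tv
    exact iInf_le_of_le U (iInf_le_of_le hUo (iInf_le_of_le hAU le_rfl))
  obtain ⟨v, g, hv, hg, hgT, hgε, hvK⟩ :=
    good_approx hΩ hUo hUΩ hK hKΩ hT (hε.trans_le h1) hη
  have hdir : Directed (· ⊆ ·) (fun n => Ω ∩ {x | 1 / 2 < φ n x}) := by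
    apply Monotone.directed_le
    intro m n hmn x hx
    exact ⟨hx.1, lt_of_lt_of_le hx.2 (hφm m n hmn x)⟩
  rw [hU, setLIntegral_iUnion_of_directed g hdir, lt_iSup_iff] at hgε
  obtain ⟨n, hn⟩ := hgε
  obtain ⟨hf, G, hG, hle⟩ := cut_main hM hΩ hv (hφ n) hg (hgT.trans hTf.lt_top) hhm (hder n)
  refine ⟨v, φ n, G, h, hv, hφ n, hhm, hhδ, hφ0 n, hφh n, hvK, hf, hG, ?_⟩
  calc _ ≤ _ := add_le_add_right hn.le _
    _ ≤ _ := hle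
    _ ≤ _ := add_le_add hgT.le (mul_le_mul_right hhδ.le _)

theorem cut_sub_same (M : ℝ) (φ v u : X → ℝ) (x : X) :
    |cut M φ v x - cut M φ u x| ≤ |v x - u x| := by
  unfold cut
  refine (clamp_sub _ _ _ _).trans (max_le le_rfl ?_)
  simp

theorem cut_dom {M : ℝ} (hM : 0 ≤ M) (φ u : X → ℝ) (x : X) :
    |cut M φ u x - u x| ≤ |u x| := by
  unfold cut
  have hp : 0 ≤ M * max (1 - 2 * φ x) 0 := mul_nonneg hM (le_max_right _ _)
  generalize M * max (1 - 2 * φ x) 0 = p at hp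
  generalize u x = a
  rcases le_total a p with h | h
  · rw [min_eq_left h]
    rcases le_total (-p) a with h' | h'
    · rw [max_eq_right h']; simp
    · rw [max_eq_left h', abs_of_nonneg (by linarith), abs_of_nonpos (by linarith)]
      linarith
  · rw [min_eq_right h, max_eq_right (by linarith), abs_of_nonpos (by linarith),
      abs_of_nonneg (by linarith)]
    linarith

theorem cut_eq {M : ℝ} {φ u : X → ℝ} {x : X} (h : |u x| ≤ M * max (1 - 2 * φ x) 0) :
    cut M φ u x = u x := by
  unfold cut
  have := abs_le.1 h
  rw [min_eq_left this.2, max_eq_right this.1]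

theorem cut_conv [ProperSpace X] {μ : Measure X} {Ω : Set X} (hΩ : IsOpen Ω) {K : ℕ → Set X}
    (hKx : ∀ x ∈ Ω, ∃ r > (0:ℝ), ∀ᶠ k in atTop, ball x r ⊆ K k)
    {u : X → ℝ} {w v φ : ℕ → X → ℝ} {h : ℕ → X → ℝ≥0∞} {M : ℕ → ℝ} {η δ : ℕ → ℝ≥0∞}
    (hM : ∀ k, 0 ≤ M k) (hMt : Tendsto M atTop atTop)
    (hu : MemL1Loc μ Ω u) (hw : ∀ k, AEMeasurable (w k) (μ.restrict Ω))
    (hconv : L1LocConv μ Ω w u)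
    (hvK : ∀ k, ∫⁻ x in K k, ENNReal.ofReal |v k x - w k x| ∂μ ≤ η k)
    (hη : Tendsto η atTop (𝓝 0)) (hhm : ∀ k, Measurable (h k))
    (hhδ : ∀ k, ∫⁻ x, h k x ∂μ ≤ δ k) (hδ : ∑' k, δ k ≠ ∞)
    (hφc : ∀ k, Continuous (φ k)) (hφ0 : ∀ k x, 0 ≤ φ k x)
    (hφh : ∀ k x, ENNReal.ofReal (φ k x) ≤ h k x) :
    L1LocConv μ Ω (fun k => cut (M k) (φ k) (v k)) u := by
  have hae : ∀ᵐ x ∂μ, Tendsto (fun k => h k x) atTop (𝓝 0) := by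
    have h1 : ∫⁻ x, ∑' k, h k x ∂μ ≠ ∞ := by
      rw [lintegral_tsum fun k => (hhm k).aemeasurable]
      exact ne_top_of_le_ne_top hδ (ENNReal.tsum_le_tsum hhδ)
    filter_upwards [ae_lt_top (Measurable.tsum hhm) h1] with x hx
    exact ENNReal.tendsto_atTop_zero_of_tsum_ne_top hx.ne
  have hpt : ∀ᵐ x ∂μ, ∀ᶠ k in atTop, cut (M k) (φ k) u x = u x := by
    filter_upwards [hae] with x hx
    filter_upwards [hx.eventually_lt_const (show (0:ℝ≥0∞) < ENNReal.ofReal (1/4) by simp),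
      hMt.eventually_ge_atTop (2 * |u x|)] with k h1 h2
    apply cut_eq
    have h3 : φ k x < 1 / 4 := by
      by_contra hcon
      exact absurd ((hφh k x).trans_lt h1) (not_lt.2 (ENNReal.ofReal_le_ofReal (not_lt.1 hcon)))
    have h4 : 1 / 2 ≤ max (1 - 2 * φ k x) 0 := le_max_of_le_left (by linarith)
    have := mul_le_mul_of_nonneg_left h4 (hM k)
    linarith
  intro x hx
  obtain ⟨r1, hr1, hK1⟩ := hKx x hx
  obtain ⟨r2, hr2, hu2⟩ := hu.2 x hx
  obtain ⟨r3, hr3, hc3⟩ := hconv x hx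
  refine ⟨min r1 (min r2 r3), by positivity, ?_⟩
  set B := Ω ∩ ball x (min r1 (min r2 r3)) with hB
  have hB1 : B ⊆ ball x r1 := inter_subset_right.trans (ball_subset_ball (min_le_left _ _))
  have hB2 : B ⊆ Ω ∩ ball x r2 := inter_subset_inter_right _
    (ball_subset_ball ((min_le_right _ _).trans (min_le_left _ _)))
  have hB3 : B ⊆ Ω ∩ ball x r3 := inter_subset_inter_right _
    (ball_subset_ball ((min_le_right _ _).trans (min_le_right _ _)))
  have hres : μ.restrict B ≤ μ.restrict Ω := Measure.restrict_mono inter_subset_left le_rfl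
  have hum : AEMeasurable u (μ.restrict B) := hu.1.mono_measure hres
  have hwm : ∀ k, AEMeasurable (w k) (μ.restrict B) := fun k => (hw k).mono_measure hres
  have hcm : ∀ k, AEMeasurable (cut (M k) (φ k) u) (μ.restrict B) := by
    intro k
    have hψ : AEMeasurable (fun x => M k * max (1 - 2 * φ k x) 0) (μ.restrict B) := by
      have : Continuous (fun x => M k * max (1 - 2 * φ k x) 0) := by
        have := hφc k
        fun_prop
      exact this.measurable.aemeasurable
    exact hψ.neg.max (hum.min hψ)
  have hm1 : ∀ k, AEMeasurable (fun y => ENNReal.ofReal |w k y - u y|) (μ.restrict B) := fun k =>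
    (continuous_abs.measurable.comp_aemeasurable ((hwm k).sub hum)).ennreal_ofReal
  have hm2 : ∀ k, AEMeasurable (fun y => ENNReal.ofReal |cut (M k) (φ k) u y - u y|)
      (μ.restrict B) := fun k =>
    (continuous_abs.measurable.comp_aemeasurable ((hcm k).sub hum)).ennreal_ofReal
  have t1 : Tendsto (fun k => ∫⁻ y in B, ENNReal.ofReal |w k y - u y| ∂μ) atTop (𝓝 0) :=
    tendsto_of_tendsto_of_tendsto_of_le_of_le tendsto_const_nhds hc3 (fun _ => zero_le)
      fun k => lintegral_mono_set hB3
  have t2 : Tendsto (fun k => ∫⁻ y in B, ENNReal.ofReal |cut (M k) (φ k) u y - u y| ∂μ)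
      atTop (𝓝 0) := by
    have := tendsto_lintegral_of_dominated_convergence' (μ := μ.restrict B)
      (F := fun k y => ENNReal.ofReal |cut (M k) (φ k) u y - u y|) (f := fun _ => 0)
      (fun y => ENNReal.ofReal |u y|) hm2
      (fun k => Eventually.of_forall fun y => ENNReal.ofReal_le_ofReal (cut_dom (hM k) _ _ _))
      ((lintegral_mono_set hB2).trans_lt hu2).ne ?_
    · simpa using this
    · filter_upwards [ae_restrict_of_ae hpt] with y hy
      refine tendsto_const_nhds.congr' ?_
      filter_upwards [hy] with k hk
      simp [hk]
  have t3 := (hη.add t1).add t2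
  simp only [add_zero] at t3
  refine tendsto_of_tendsto_of_tendsto_of_le_of_le' tendsto_const_nhds t3
    (Eventually.of_forall fun _ => zero_le) ?_
  filter_upwards [hK1] with k hk
  calc ∫⁻ y in B, ENNReal.ofReal |cut (M k) (φ k) (v k) y - u y| ∂μ
      ≤ ∫⁻ y in B, ((ENNReal.ofReal |v k y - w k y| + ENNReal.ofReal |w k y - u y|) +
        ENNReal.ofReal |cut (M k) (φ k) u y - u y|) ∂μ := by
        apply lintegral_mono
        intro y
        simp only
        rw [← ENNReal.ofReal_add (abs_nonneg _) (abs_nonneg _),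
          ← ENNReal.ofReal_add (by positivity) (abs_nonneg _)]
        apply ENNReal.ofReal_le_ofReal
        have e1 := abs_sub_le (cut (M k) (φ k) (v k) y) (cut (M k) (φ k) u y) (u y)
        have e2 := cut_sub_same (M k) (φ k) (v k) u y
        have e3 := abs_sub_le (v k y) (w k y) (u y)
        linarith
    _ = _ := by
        rw [lintegral_add_right' _ (hm2 k), lintegral_add_right' _ (hm1 k)]
    _ ≤ _ := by
        gcongr
        exact (lintegral_mono_set (hB1.trans hk)).trans (hvK k)

theorem main_aux [ProperSpace X] {μ : Measure X} [IsLocallyFiniteMeasure μ] {Cd CP lam : ℝ}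
    (hd : Doubling μ Cd) (hP : Poincare μ CP lam) {Ω : Set X} (hΩ : IsOpen Ω)
    {u : X → ℝ} {ui : ℕ → X → ℝ} (hu : MemL1Loc μ Ω u) (hui : ∀ i, MemL1Loc μ Ω (ui i))
    (hconv : L1LocConv μ Ω ui u) (hfin : tvOpen μ Ω u < ∞) (hfini : ∀ i, tvOpen μ Ω (ui i) < ∞)
    (htv : Tendsto (fun i => tvOpen μ Ω (ui i)) atTop (𝓝 (tvOpen μ Ω u)))
    {ε : ℝ≥0∞} (hε : 0 < ε) (hεf : ε ≠ ∞) :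
    ∃ δ : ℝ, 0 < δ ∧ ∃ N : ℕ, ∀ i ≥ N, ∀ A ⊆ Ω, capa1 μ A < ENNReal.ofReal δ →
      tv μ A (ui i) < ε := by
  by_contra! hcon
  have hcon' := fun k : ℕ => hcon ((1/4:ℝ)^k) (by positivity) k
  choose σ hσ A hA hcap hge using hcon'
  obtain ⟨K, hKc, hKΩ, hKx⟩ := exhaust hΩ
  have hσt : Tendsto σ atTop atTop := tendsto_atTop_mono hσ tendsto_id
  have hε2 : ε / 2 < ε := ENNReal.half_lt_self hε.ne' hεf
  have hpos : ∀ k : ℕ, 0 < ENNReal.ofReal ((1/2:ℝ)^k) := fun k => by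
    rw [ENNReal.ofReal_pos]; positivity
  have hst := fun k : ℕ => one_step hd hP hΩ (hA k) (hKc k) (hKΩ k) (w := ui (σ k))
    (M := 2^k) (by positivity) (hcap k) (hε2.trans_le (hge k))
    (ENNReal.lt_add_right (hfini (σ k)).ne (hpos k).ne')
    (ENNReal.add_ne_top.2 ⟨(hfini (σ k)).ne, ENNReal.ofReal_ne_top⟩) (hpos k)
  choose v φ G h hv hφ hhm hhδ hφ0 hφh hvK hf hG hle using hst
  have hη : Tendsto (fun k : ℕ => ENNReal.ofReal ((1/2:ℝ)^k)) atTop (𝓝 0) := by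
    have := ENNReal.tendsto_ofReal (tendsto_pow_atTop_nhds_zero_of_lt_one
      (by norm_num : (0:ℝ) ≤ 1/2) (by norm_num))
    simpa using this
  have hc : L1LocConv μ Ω (fun k => cut (2^k) (φ k) (v k)) u := by
    refine cut_conv hΩ hKx (w := fun k => ui (σ k)) (h := h) (M := fun k => 2^k)
      (η := fun k : ℕ => ENNReal.ofReal ((1/2:ℝ)^k))
      (δ := fun k : ℕ => ENNReal.ofReal ((1/4:ℝ)^k)) (fun k => by positivity)
      (tendsto_pow_atTop_atTop_of_one_lt (by norm_num)) hu (fun k => (hui _).1)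
      (hconv.comp hσt) (fun k => (hvK k).le) hη hhm (fun k => (hhδ k).le) ?_
      (fun k => (hφ k).continuous) hφ0 hφh
    exact (summable_geometric_of_lt_one (by norm_num) (by norm_num)).tsum_ofReal_ne_top
  have h1 : tvOpen μ Ω u ≤ liminf (fun k => ∫⁻ x in Ω, G k x ∂μ) atTop := by
    conv_lhs => unfold tvOpen
    exact iInf_le_of_le _ (iInf_le_of_le G (iInf_le_of_le hf (iInf_le_of_le hG
      (iInf_le_of_le hc le_rfl))))
  have h2 : Tendsto (fun k => (tvOpen μ Ω (ui (σ k)) + ENNReal.ofReal ((1/2:ℝ)^k)) +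
      ENNReal.ofReal (2 * 2^k) * ENNReal.ofReal ((1/4:ℝ)^k)) atTop (𝓝 (tvOpen μ Ω u)) := by
    have e : ∀ k : ℕ, ENNReal.ofReal (2 * 2^k) * ENNReal.ofReal ((1/4:ℝ)^k) =
        ENNReal.ofReal 2 * ENNReal.ofReal ((1/2:ℝ)^k) := by
      intro k
      rw [← ENNReal.ofReal_mul (by positivity), ← ENNReal.ofReal_mul (by positivity), mul_assoc,
        ← mul_pow]
      norm_num
    simp only [e]
    have := ((htv.comp hσt).add hη).add (ENNReal.Tendsto.const_mul (a := ENNReal.ofReal 2) hη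
      (Or.inr ENNReal.ofReal_ne_top))
    simpa using this
  have hpos2 : 0 < ε / 2 := ENNReal.half_pos hε.ne'
  rcases eq_or_ne (tvOpen μ Ω u) 0 with h0 | h0
  · have := h2.eventually_lt_const (h0 ▸ hpos2)
    obtain ⟨k, hk⟩ := this.exists
    exact absurd ((le_add_self.trans (hle k)).trans_lt hk) (lt_irrefl _)
  · have hf2 : ε / 2 ≠ ∞ := (hε2.trans_le le_top).ne
    have h3 : max (tvOpen μ Ω u) (ε / 2) < tvOpen μ Ω u + ε / 2 :=
      max_lt (ENNReal.lt_add_right hfin.ne hpos2.ne')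
        (by rw [add_comm]; exact ENNReal.lt_add_right hf2 h0)
    obtain ⟨c, hc1, hc2⟩ := exists_between h3
    have h4 : c - ε / 2 < tvOpen μ Ω u :=
      ENNReal.sub_lt_of_lt_add ((le_max_right _ _).trans hc1.le) hc2
    have h5 := eventually_lt_of_lt_liminf (h4.trans_le h1) (by isBoundedDefault)
    obtain ⟨k, hk1, hk2⟩ :=
      (h5.and (h2.eventually_lt_const ((le_max_left _ _).trans_lt hc1))).exists
    exact absurd ((hle k).trans_lt hk2) (not_lt.2 (tsub_le_iff_right.1 hk1.le))

theorem fin_min {P : ℕ → ℝ → Prop} (hP : ∀ i, ∃ δ, 0 < δ ∧ P i δ)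
    (hmono : ∀ i δ δ', δ' ≤ δ → P i δ → P i δ') (N : ℕ) : ∃ δ, 0 < δ ∧ ∀ i < N, P i δ := by
  induction N with
  | zero => exact ⟨1, one_pos, fun i hi => absurd hi (Nat.not_lt_zero i)⟩
  | succ n ih =>
    obtain ⟨d, hd, h⟩ := ih
    obtain ⟨d', hd', h'⟩ := hP n
    refine ⟨min d d', lt_min hd hd', fun i hi => ?_⟩
    rcases Nat.lt_succ_iff_lt_or_eq.1 hi with h1 | rfl
    · exact hmono i d _ (min_le_left _ _) (h i h1)
    · exact hmono i d' _ (min_le_right _ _) h'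


/-- Uniform absolute continuity with respect to the `1`-capacity:
if `Ω` is open, `u_i → u` in `L¹_loc(Ω)` and `‖Du_i‖(Ω) → ‖Du‖(Ω)` with all these
variations finite, then for every `ε > 0` there is `δ > 0` such that `A ⊆ Ω` and
`capa₁(A) < δ` imply `‖Du_i‖(A) < ε` for all `i`. -/
theorem uniform_absolute_continuity
    (μ : Measure X) (hcomp : CompleteSpace X)
    (hdoub : ∃ Cd : ℝ, Doubling μ Cd) (hpoin : ∃ CP lam : ℝ, Poincare μ CP lam)
    (Ω : Set X) (hΩ : IsOpen Ω) (u : X → ℝ) (ui : ℕ → X → ℝ)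
    (hu : MemL1Loc μ Ω u) (hui : ∀ i, MemL1Loc μ Ω (ui i))
    (hconv : L1LocConv μ Ω ui u)
    (hfin : tvOpen μ Ω u < ∞) (hfini : ∀ i, tvOpen μ Ω (ui i) < ∞)
    (htv : Filter.Tendsto (fun i => tvOpen μ Ω (ui i)) Filter.atTop (𝓝 (tvOpen μ Ω u))) :
    ∀ ε : ℝ, 0 < ε → ∃ δ : ℝ, 0 < δ ∧
      ∀ A : Set X, A ⊆ Ω → capa1 μ A < ENNReal.ofReal δ →
        ∀ i, tv μ A (ui i) < ENNReal.ofReal ε := by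
  intro ε hε
  obtain ⟨Cd, hd⟩ := hdoub
  obtain ⟨CP, lam, hP⟩ := hpoin
  haveI : ProperSpace X := hd.proper
  haveI : IsLocallyFiniteMeasure μ := hd.locFin
  have hε' : 0 < ENNReal.ofReal ε := ENNReal.ofReal_pos.2 hε
  obtain ⟨δ0, hδ0, N, hN⟩ := main_aux hd hP hΩ hu hui hconv hfin hfini htv hε'
    ENNReal.ofReal_ne_top
  obtain ⟨δ1, hδ1, h1⟩ := fin_min (P := fun i δ => ∀ A : Set X, A ⊆ Ω →
      capa1 μ A < ENNReal.ofReal δ → tv μ A (ui i) < ENNReal.ofReal ε) (by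
      intro i
      obtain ⟨d, hd0, n, hn⟩ := main_aux hd hP hΩ (hui i) (ui := fun _ => ui i) (fun _ => hui i)
        (fun x _ => ⟨1, one_pos, by simp⟩) (hfini i) (fun _ => hfini i) tendsto_const_nhds hε'
        ENNReal.ofReal_ne_top
      exact ⟨d, hd0, fun A hA hc => hn n le_rfl A hA hc⟩) (by
      intro i d d' hdd h A hA hc
      exact h A hA (hc.trans_le (ENNReal.ofReal_le_ofReal hdd))) N
  refine ⟨min δ0 δ1, lt_min hδ0 hδ1, fun A hA hc i => ?_⟩
  rcases lt_or_ge i N with hi | hi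
  · exact h1 i hi A hA (hc.trans_le (ENNReal.ofReal_le_ofReal (min_le_right _ _)))
  · exact hN i hi A hA (hc.trans_le (ENNReal.ofReal_le_ofReal (min_le_left _ _)))

end PaperBV
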